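/- Let n ≥ 5. There is a constant C (depending only on n and η) such that for all x ∈ ℝ^{n-1}, t ∈ ℝ, and s ∈ (−1/10,1/10), the second symmetric difference of the inverse Fourier transforms of the truncated level-set measures satisfies |(σ_s^{(0)})^∨(x,t) − 2(σ_0^{(0)})^∨(x,t) + (σ_{−s}^{(0)})^∨(x,t)| ≤ C(1+|t|)^{(2−n)/2} · min((1+|t|)² s², 1). -/

import Mathlib

open MeasureTheory Real FourierTransform Filter
open scoped ENNReal RealInnerProductSpace

noncomputable section

/-- `ℝⁿ = ℝ^{n-1} × ℝ`, realized as `EuclideanSpace ℝ (Fin (m+1))` with `m = n-1`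
spatial coordinates and the last coordinate playing the role of time. -/
abbrev Spacetime (m : ℕ) := EuclideanSpace ℝ (Fin (m + 1))

namespace Wave

variable {m : ℕ}

/-- The time coordinate `τ` of a point `z = (ξ, τ)`. -/
def timeCoord (z : Spacetime m) : ℝ := z (Fin.last m)

/-- `g(ξ,τ) = |ξ|² - τ²`, written using `|ξ|² = ‖z‖² - τ²`. -/
def waveSymbol (z : Spacetime m) : ℝ := ‖z‖ ^ 2 - 2 * timeCoord z ^ 2

/-- The canonical surface measure `σ_s` on the level set `g⁻¹(s)` of
`g(ξ,τ) = |ξ|² - τ²`: the `(n-1)`-dimensional Hausdorff measure restricted to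
`g⁻¹(s)` (with the origin deleted). -/
def levelMeasure (m : ℕ) (s : ℝ) : Measure (Spacetime m) :=
  (μH[(m : ℝ)]).restrict {z | waveSymbol z = s ∧ z ≠ 0}

/-- `(σ_s^{(0)})^∨(w)`: the inverse Fourier transform of the truncated surface measure
`σ_s^{(0)} = η σ_s`, evaluated at `w = (x,t)`. -/
def sigmaCheck (η : Spacetime m → ℝ) (s : ℝ) (w : Spacetime m) : ℂ :=
  ∫ z, (η z : ℂ) * Complex.exp (2 * (π : ℂ) * Complex.I * ((⟪z, w⟫ : ℝ) : ℂ))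
    ∂(levelMeasure m s)

end Wave

open Wave

open scoped NNReal Topology

/-- Comparison of Hausdorff measures of two images of the same set. -/
lemma hausdorffMeasure_image_le_of_edist_le {X Y Z : Type*} [EMetricSpace Y] [MeasurableSpace Y]
    [BorelSpace Y] [EMetricSpace Z] [MeasurableSpace Z] [BorelSpace Z] {f : X → Y} {g : X → Z}
    {K : ℝ≥0} {A : Set X} {d : ℝ} (hd : 0 ≤ d)
    (h : ∀ x ∈ A, ∀ y ∈ A, edist (f x) (f y) ≤ K * edist (g x) (g y)) :
    μH[d] (f '' A) ≤ (K : ℝ≥0∞) ^ d * μH[d] (g '' A) := by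
  classical
  rcases A.eq_empty_or_nonempty with rfl | ⟨a, _⟩
  · simp
  have : Nonempty X := ⟨a⟩
  set r : Z → X := Function.invFunOn g A
  have hr : ∀ z ∈ g '' A, r z ∈ A ∧ g (r z) = z := fun z hz =>
    ⟨Function.invFunOn_mem hz, Function.invFunOn_eq hz⟩
  have hLip : LipschitzOnWith K (f ∘ r) (g '' A) := by
    intro x hx y hy
    have := h _ (hr x hx).1 _ (hr y hy).1
    rwa [(hr x hx).2, (hr y hy).2] at this
  have himg : f '' A = (f ∘ r) '' (g '' A) := by
    ext y
    constructor
    · rintro ⟨x, hx, rfl⟩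
      refine ⟨g x, ⟨x, hx, rfl⟩, ?_⟩
      have hgx := hr (g x) ⟨x, hx, rfl⟩
      have := h _ hgx.1 _ hx
      rw [hgx.2, edist_self, mul_zero] at this
      exact edist_le_zero.1 this
    · rintro ⟨z, hz, rfl⟩
      exact ⟨r z, (hr z hz).1, rfl⟩
  rw [himg]
  exact hLip.hausdorffMeasure_image_le hd

/-- Measures that are locally comparable on a set are comparable on it. -/
lemma measure_le_of_locally_le {X : Type*} [TopologicalSpace X] [SecondCountableTopology X]
    [MeasurableSpace X] [OpensMeasurableSpace X] {μ ν : Measure X} {U : Set X}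
    (h : ∀ x ∈ U, ∃ V ∈ 𝓝 x, ∀ A, MeasurableSet A → A ⊆ V → A ⊆ U → μ A ≤ ν A)
    {A : Set X} (hA : MeasurableSet A) (hAU : A ⊆ U) : μ A ≤ ν A := by
  classical
  choose! V hV hVA using h
  obtain ⟨t, htU, htc, hcov⟩ := TopologicalSpace.countable_cover_nhdsWithin
    (f := fun x => interior (V x)) (s := U)
    (fun x hx => mem_nhdsWithin_of_mem_nhds (interior_mem_nhds.2 (hV x hx)))
  rcases t.eq_empty_or_nonempty with rfl | hne
  · have : A = ∅ := by
      apply Set.eq_empty_of_subset_empty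
      simpa using hAU.trans hcov
    simp [this]
  obtain ⟨x, rfl⟩ := htc.exists_eq_range hne
  set W : ℕ → Set X := fun i => interior (V (x i))
  have hWm : ∀ i, MeasurableSet (disjointed W i) := fun i =>
    MeasurableSet.disjointed (fun i => isOpen_interior.measurableSet) i
  have hAeq : A = ⋃ i, A ∩ disjointed W i := by
    rw [← Set.inter_iUnion, iUnion_disjointed, eq_comm, Set.inter_eq_left]
    refine hAU.trans (hcov.trans ?_)
    simp [W]
  have hd : Pairwise (Function.onFun Disjoint fun i => A ∩ disjointed W i) := fun i j hij =>
    (disjoint_disjointed W hij).mono Set.inter_subset_right Set.inter_subset_right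
  have hm : ∀ i, MeasurableSet (A ∩ disjointed W i) := fun i => hA.inter (hWm i)
  rw [hAeq, measure_iUnion hd hm, measure_iUnion hd hm]
  refine ENNReal.tsum_le_tsum fun i => ?_
  refine hVA (x i) (htU ⟨i, rfl⟩) _ (hm i) ?_ (Set.inter_subset_left.trans hAU)
  exact Set.inter_subset_right.trans ((disjointed_subset W i).trans interior_subset)

section graph

variable {m : ℕ}

/-- The spatial component of a point of spacetime. -/
def spacePart (z : Spacetime m) : EuclideanSpace ℝ (Fin m) :=
  WithLp.toLp 2 fun i => z i.castSucc

/-- The point of spacetime with prescribed spatial and time components. -/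
def joinTime (ξ : EuclideanSpace ℝ (Fin m)) (τ : ℝ) : Spacetime m :=
  WithLp.toLp 2 (Fin.snoc (α := fun _ => ℝ) (fun i => ξ i) τ)

@[simp] lemma spacePart_joinTime (ξ : EuclideanSpace ℝ (Fin m)) (τ : ℝ) :
    spacePart (joinTime ξ τ) = ξ := by
  ext i; simp [spacePart, joinTime]

@[simp] lemma timeCoord_joinTime (ξ : EuclideanSpace ℝ (Fin m)) (τ : ℝ) :
    timeCoord (joinTime ξ τ) = τ := by
  simp [timeCoord, joinTime]

lemma joinTime_spacePart (z : Spacetime m) : joinTime (spacePart z) (timeCoord z) = z := by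
  ext i
  refine Fin.lastCases ?_ (fun j => ?_) i <;> simp [spacePart, joinTime, timeCoord]

lemma inner_eq_spacePart_add (z w : Spacetime m) :
    ⟪z, w⟫ = ⟪spacePart z, spacePart w⟫ + timeCoord z * timeCoord w := by
  simp [PiLp.inner_apply, Fin.sum_univ_castSucc, spacePart, timeCoord, mul_comm]

lemma norm_sq_eq_spacePart_add (z : Spacetime m) :
    ‖z‖ ^ 2 = ‖spacePart z‖ ^ 2 + timeCoord z ^ 2 := by
  rw [← real_inner_self_eq_norm_sq, ← real_inner_self_eq_norm_sq, inner_eq_spacePart_add]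
  ring

@[fun_prop] lemma continuous_spacePart : Continuous (spacePart (m := m)) := by
  unfold spacePart; fun_prop

@[fun_prop] lemma continuous_timeCoord : Continuous (timeCoord (m := m)) := by
  unfold timeCoord; fun_prop

lemma spacePart_sub (z w : Spacetime m) : spacePart (z - w) = spacePart z - spacePart w := by
  ext i; simp [spacePart]

lemma timeCoord_sub (z w : Spacetime m) : timeCoord (z - w) = timeCoord z - timeCoord w := by
  simp [timeCoord]

lemma joinTime_sub (ξ ξ' : EuclideanSpace ℝ (Fin m)) (τ τ' : ℝ) :
    joinTime ξ τ - joinTime ξ' τ' = joinTime (ξ - ξ') (τ - τ') := by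
  rw [← joinTime_spacePart (joinTime ξ τ - joinTime ξ' τ'), spacePart_sub, timeCoord_sub]
  simp

lemma norm_joinTime_sq (ξ : EuclideanSpace ℝ (Fin m)) (τ : ℝ) :
    ‖joinTime ξ τ‖ ^ 2 = ‖ξ‖ ^ 2 + τ ^ 2 := by
  simp [norm_sq_eq_spacePart_add]

/-- A linear map of `E` with `‖T v‖² = ‖v‖² + ⟪g, v⟫²`. -/
def stretch (g : EuclideanSpace ℝ (Fin m)) :
    EuclideanSpace ℝ (Fin m) →ₗ[ℝ] EuclideanSpace ℝ (Fin m) :=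
  LinearMap.transvection (innerₗ _ g) ((1 + √(1 + ‖g‖ ^ 2))⁻¹ • g)

lemma norm_stretch_sq (g v : EuclideanSpace ℝ (Fin m)) :
    ‖stretch g v‖ ^ 2 = ‖v‖ ^ 2 + ⟪g, v⟫ ^ 2 := by
  have h0 : 0 ≤ √(1 + ‖g‖ ^ 2) := Real.sqrt_nonneg _
  have hs : √(1 + ‖g‖ ^ 2) ^ 2 = 1 + ‖g‖ ^ 2 := Real.sq_sqrt (by positivity)
  have : stretch g v = v + (⟪g, v⟫ * (1 + √(1 + ‖g‖ ^ 2))⁻¹) • g := by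
    simp [stretch, LinearMap.transvection.apply, smul_smul]
  rw [this, norm_add_sq_real, norm_smul, mul_pow, inner_smul_right, real_inner_comm]
  simp only [Real.norm_eq_abs, sq_abs]
  have hg : ‖g‖ ^ 2 = √(1 + ‖g‖ ^ 2) ^ 2 - 1 := by rw [hs]; ring
  generalize √(1 + ‖g‖ ^ 2) = b at *
  rw [hg]
  have : (1 + b) ≠ 0 := by positivity
  field_simp
  ring

lemma det_stretch (g : EuclideanSpace ℝ (Fin m)) :
    LinearMap.det (stretch g) = √(1 + ‖g‖ ^ 2) := by
  have h0 : 0 ≤ √(1 + ‖g‖ ^ 2) := Real.sqrt_nonneg _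
  have hs : √(1 + ‖g‖ ^ 2) ^ 2 = 1 + ‖g‖ ^ 2 := Real.sq_sqrt (by positivity)
  rw [stretch, LinearMap.transvection.det]
  simp only [innerₗ_apply_apply, inner_smul_right, real_inner_self_eq_norm_sq]
  have hg : ‖g‖ ^ 2 = √(1 + ‖g‖ ^ 2) ^ 2 - 1 := by rw [hs]; ring
  generalize √(1 + ‖g‖ ^ 2) = b at *
  rw [hg]
  have : (1 + b) ≠ 0 := by positivity
  field_simp
  ring

lemma hausdorffMeasure_image_stretch (g : EuclideanSpace ℝ (Fin m))
    (A : Set (EuclideanSpace ℝ (Fin m))) :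
    μH[(m : ℝ)] (stretch g '' A) = ENNReal.ofReal √(1 + ‖g‖ ^ 2) * μH[(m : ℝ)] A := by
  have : Measure.IsAddHaarMeasure (μH[(m : ℝ)] : Measure (EuclideanSpace ℝ (Fin m))) := by
    simpa using isAddHaarMeasure_hausdorffMeasure (E := EuclideanSpace ℝ (Fin m))
  rw [Measure.addHaar_image_linearMap, det_stretch, abs_of_nonneg (Real.sqrt_nonneg _)]

lemma abs_norm_graph_sub_le {φ : EuclideanSpace ℝ (Fin m) → ℝ} {g x y : EuclideanSpace ℝ (Fin m)}
    {δ : ℝ} (h : |φ x - φ y - ⟪g, x - y⟫| ≤ δ * ‖x - y‖) :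
    |‖joinTime x (φ x) - joinTime y (φ y)‖ - ‖stretch g x - stretch g y‖|
      ≤ δ * ‖stretch g x - stretch g y‖ := by
  have hle : ‖x - y‖ ≤ ‖stretch g (x - y)‖ := by
    apply le_of_sq_le_sq _ (norm_nonneg _)
    rw [norm_stretch_sq]; nlinarith [sq_nonneg ⟪g, x - y⟫]
  have heq : ‖stretch g (x - y)‖ = ‖joinTime (x - y) ⟪g, x - y⟫‖ := by
    rw [← sq_eq_sq₀ (norm_nonneg _) (norm_nonneg _), norm_stretch_sq, norm_joinTime_sq]
  have hδ : |‖joinTime x (φ x) - joinTime y (φ y)‖ - ‖stretch g (x - y)‖| ≤ δ * ‖x - y‖ := by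
    rw [heq, joinTime_sub]
    refine (abs_norm_sub_norm_le _ _).trans ?_
    rw [joinTime_sub, sub_self]
    have : ‖joinTime (0 : EuclideanSpace ℝ (Fin m)) (φ x - φ y - ⟪g, x - y⟫)‖
        = |φ x - φ y - ⟪g, x - y⟫| := by
      rw [← sq_eq_sq₀ (norm_nonneg _) (abs_nonneg _), norm_joinTime_sq, sq_abs]; simp
    rwa [this]
  rw [← map_sub]
  refine hδ.trans ?_
  rcases eq_or_ne x y with rfl | hne
  · simp
  · have : 0 < ‖x - y‖ := norm_pos_iff.2 (sub_ne_zero.2 hne)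
    have hδ0 : 0 ≤ δ := by
      by_contra hneg
      push Not at hneg
      nlinarith [abs_nonneg (φ x - φ y - ⟪g, x - y⟫)]
    gcongr

end graph

section area

variable {m : ℕ} {U : Set (EuclideanSpace ℝ (Fin m))} {φ : EuclideanSpace ℝ (Fin m) → ℝ}
  {g : EuclideanSpace ℝ (Fin m) → EuclideanSpace ℝ (Fin m)}

lemma exists_nhds_graph_comparison {a : EuclideanSpace ℝ (Fin m)}
    (hφ : HasStrictFDerivAt φ (innerSL ℝ (g a)) a) (hg : ContinuousAt g a) {K : ℝ≥0}
    (hK : 1 < K) :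
    ∃ V ∈ 𝓝 a, ∀ A, MeasurableSet A → A ⊆ V →
      μH[(m : ℝ)] ((fun ξ => joinTime ξ (φ ξ)) '' A) ≤
        (K : ℝ≥0∞) ^ (m + 1) * ∫⁻ ξ in A, ENNReal.ofReal √(1 + ‖g ξ‖ ^ 2) ∂μH[(m : ℝ)] ∧
      ∫⁻ ξ in A, ENNReal.ofReal √(1 + ‖g ξ‖ ^ 2) ∂μH[(m : ℝ)] ≤
        (K : ℝ≥0∞) ^ (m + 1) * μH[(m : ℝ)] ((fun ξ => joinTime ξ (φ ξ)) '' A) := by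
  have hK1 : (1 : ℝ) < K := by exact_mod_cast hK
  have hK0 : (0 : ℝ) < K := by linarith
  obtain ⟨δ, hδ⟩ : ∃ δ : ℝ≥0, (δ : ℝ) = 1 - (K : ℝ)⁻¹ :=
    ⟨⟨1 - (K : ℝ)⁻¹, sub_nonneg.2 (inv_le_one_of_one_le₀ hK1.le)⟩, rfl⟩
  have hδpos : 0 < δ := by
    rw [← NNReal.coe_pos, hδ, sub_pos]
    exact inv_lt_one_of_one_lt₀ hK1
  obtain ⟨V₁, hV₁, happ⟩ := hφ.approximates_deriv_on_nhds (Or.inr hδpos)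
  set J : EuclideanSpace ℝ (Fin m) → ℝ := fun ξ => √(1 + ‖g ξ‖ ^ 2) with hJ
  have hJpos : ∀ ξ, 0 < J ξ := fun ξ => Real.sqrt_pos.2 (by positivity)
  have hJc : ContinuousAt J a := by
    simp only [hJ]; fun_prop
  have h1 : ∀ᶠ ξ in 𝓝 a, J ξ < K * J a :=
    hJc.eventually_lt_const (by nlinarith [hJpos a])
  have h2 : ∀ᶠ ξ in 𝓝 a, (K : ℝ)⁻¹ * J a < J ξ := by
    refine hJc.eventually_const_lt ?_
    have : (K : ℝ)⁻¹ < 1 := inv_lt_one_of_one_lt₀ hK1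
    nlinarith [hJpos a]
  refine ⟨V₁ ∩ {ξ | J ξ < K * J a ∧ (K : ℝ)⁻¹ * J a < J ξ}, inter_mem hV₁ (h1.and h2), ?_⟩
  intro A hA hAV
  have hlip : ∀ x ∈ A, ∀ y ∈ A, |‖joinTime x (φ x) - joinTime y (φ y)‖ -
      ‖stretch (g a) x - stretch (g a) y‖| ≤ δ * ‖stretch (g a) x - stretch (g a) y‖ := by
    intro x hx y hy
    apply abs_norm_graph_sub_le
    simpa using happ x (hAV hx).1 y (hAV hy).1
  have hinv : (K : ℝ) * (K : ℝ)⁻¹ = 1 := mul_inv_cancel₀ hK0.ne'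
  have he : ∀ {Y Z : Type} [NormedAddCommGroup Y] [NormedAddCommGroup Z] (y y' : Y) (z z' : Z),
      ‖y - y'‖ ≤ K * ‖z - z'‖ → edist y y' ≤ K * edist z z' := by
    intro Y Z _ _ y y' z z' h
    rw [edist_dist, edist_dist, dist_eq_norm, dist_eq_norm,
      ← ENNReal.ofReal_coe_nnreal (p := K), ← ENNReal.ofReal_mul hK0.le]
    exact ENNReal.ofReal_le_ofReal h
  have hA1 : μH[(m : ℝ)] ((fun ξ => joinTime ξ (φ ξ)) '' A) ≤
      (K : ℝ≥0∞) ^ (m : ℝ) * μH[(m : ℝ)] (stretch (g a) '' A) := by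
    refine hausdorffMeasure_image_le_of_edist_le (Nat.cast_nonneg _) fun x hx y hy => he _ _ _ _ ?_
    have h := (abs_le.1 (hlip x hx y hy)).2
    have hn := norm_nonneg (stretch (g a) x - stretch (g a) y)
    rw [hδ] at h
    have : 2 - (K : ℝ)⁻¹ ≤ K := by
      nlinarith [sq_nonneg ((K : ℝ) - 1), inv_pos.2 hK0]
    nlinarith
  have hA2 : μH[(m : ℝ)] (stretch (g a) '' A) ≤
      (K : ℝ≥0∞) ^ (m : ℝ) * μH[(m : ℝ)] ((fun ξ => joinTime ξ (φ ξ)) '' A) := by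
    refine hausdorffMeasure_image_le_of_edist_le (Nat.cast_nonneg _) fun x hx y hy => he _ _ _ _ ?_
    have h := (abs_le.1 (hlip x hx y hy)).1
    rw [hδ] at h
    have : (K : ℝ)⁻¹ * ‖stretch (g a) x - stretch (g a) y‖ ≤
      ‖joinTime x (φ x) - joinTime y (φ y)‖ := by linarith
    calc ‖stretch (g a) x - stretch (g a) y‖
        = K * ((K : ℝ)⁻¹ * ‖stretch (g a) x - stretch (g a) y‖) := by
          rw [← mul_assoc, hinv, one_mul]
      _ ≤ _ := by gcongr
  rw [hausdorffMeasure_image_stretch, ENNReal.rpow_natCast] at hA1 hA2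
  have hB1 : ∫⁻ ξ in A, ENNReal.ofReal (J ξ) ∂μH[(m : ℝ)] ≤
      K * (ENNReal.ofReal (J a) * μH[(m : ℝ)] A) := by
    calc ∫⁻ ξ in A, ENNReal.ofReal (J ξ) ∂μH[(m : ℝ)]
        ≤ ∫⁻ ξ in A, K * ENNReal.ofReal (J a) ∂μH[(m : ℝ)] := by
          refine setLIntegral_mono' hA fun ξ hξ => ?_
          rw [← ENNReal.ofReal_coe_nnreal (p := K), ← ENNReal.ofReal_mul hK0.le]
          exact ENNReal.ofReal_le_ofReal (hAV hξ).2.1.le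
      _ = _ := by rw [setLIntegral_const, mul_assoc]
  have hB2 : ENNReal.ofReal (J a) * μH[(m : ℝ)] A ≤
      K * ∫⁻ ξ in A, ENNReal.ofReal (J ξ) ∂μH[(m : ℝ)] := by
    rw [← setLIntegral_const, ← lintegral_const_mul' _ _ ENNReal.coe_ne_top]
    refine setLIntegral_mono' hA fun ξ hξ => ?_
    rw [← ENNReal.ofReal_coe_nnreal (p := K), ← ENNReal.ofReal_mul hK0.le]
    refine ENNReal.ofReal_le_ofReal ?_
    have := (hAV hξ).2.2.le
    calc J a = K * ((K : ℝ)⁻¹ * J a) := by rw [← mul_assoc, hinv, one_mul]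
      _ ≤ _ := by gcongr
  constructor
  · calc _ ≤ _ := hA1
      _ ≤ (K : ℝ≥0∞) ^ m * (K * ∫⁻ ξ in A, ENNReal.ofReal (J ξ) ∂μH[(m : ℝ)]) := by gcongr
      _ = _ := by rw [pow_succ, mul_assoc]
  · calc _ ≤ _ := hB1
      _ ≤ K * ((K : ℝ≥0∞) ^ m * μH[(m : ℝ)] ((fun ξ => joinTime ξ (φ ξ)) '' A)) := by gcongr
      _ = _ := by rw [pow_succ', mul_assoc]

lemma ennreal_le_of_forall_one_lt_pow_mul {a b : ℝ≥0∞} (k : ℕ)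
    (h : ∀ K : ℝ≥0, 1 < K → a ≤ (K : ℝ≥0∞) ^ k * b) : a ≤ b := by
  have ht : Tendsto (fun K : ℝ≥0 => (K : ℝ≥0∞) ^ k * b) (𝓝[>] 1) (𝓝 ((1 : ℝ≥0∞) ^ k * b)) := by
    refine ENNReal.Tendsto.mul_const ?_ (Or.inl (by simp))
    have : Continuous fun K : ℝ≥0 => (K : ℝ≥0∞) ^ k := by fun_prop
    have h1 := this.tendsto 1
    simp only [ENNReal.coe_one] at h1
    exact h1.mono_left nhdsWithin_le_nhds
  rw [one_pow, one_mul] at ht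
  exact ge_of_tendsto ht (eventually_mem_nhdsWithin.mono fun K hK => h K hK)

/-- Area formula for a graph, in terms of Hausdorff measures. -/
theorem map_spacePart_graph (hU : IsOpen U)
    (hφ : ∀ a ∈ U, HasStrictFDerivAt φ (innerSL ℝ (g a)) a) (hg : ContinuousOn g U) :
    Measure.map spacePart ((μH[(m : ℝ)] : Measure (Spacetime m)).restrict
        {z | spacePart z ∈ U ∧ timeCoord z = φ (spacePart z)}) =
      (μH[(m : ℝ)].restrict U).withDensity fun ξ => ENNReal.ofReal √(1 + ‖g ξ‖ ^ 2) := by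
  set S : Set (Spacetime m) := {z | spacePart z ∈ U ∧ timeCoord z = φ (spacePart z)}
  set ν := Measure.map spacePart ((μH[(m : ℝ)] : Measure (Spacetime m)).restrict S) with hν
  set κ := (μH[(m : ℝ)].restrict U).withDensity fun ξ => ENNReal.ofReal √(1 + ‖g ξ‖ ^ 2) with hκ
  have hνA : ∀ A, MeasurableSet A →
      ν A = μH[(m : ℝ)] ((fun ξ => joinTime ξ (φ ξ)) '' (A ∩ U)) := by
    intro A hA
    rw [hν, Measure.map_apply continuous_spacePart.measurable hA,
      Measure.restrict_apply (continuous_spacePart.measurable hA)]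
    congr 1
    ext z
    constructor
    · rintro ⟨h1, h2, h3⟩
      exact ⟨spacePart z, ⟨h1, h2⟩, by simp only [← h3, joinTime_spacePart]⟩
    · rintro ⟨ξ, ⟨h1, h2⟩, rfl⟩
      simp [S, h1, h2]
  have hκA : ∀ A, MeasurableSet A →
      κ A = ∫⁻ ξ in A ∩ U, ENNReal.ofReal √(1 + ‖g ξ‖ ^ 2) ∂μH[(m : ℝ)] := by
    intro A hA
    rw [hκ, withDensity_apply _ hA, Measure.restrict_restrict hA]
  have key : ∀ K : ℝ≥0, 1 < K → ∀ A, MeasurableSet A →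
      ν A ≤ (K : ℝ≥0∞) ^ (m + 1) * κ A ∧ κ A ≤ (K : ℝ≥0∞) ^ (m + 1) * ν A := by
    intro K hK A hA
    have hAU := hA.inter hU.measurableSet
    have e1 : ν A = ν (A ∩ U) := by rw [hνA A hA, hνA _ hAU, Set.inter_assoc, Set.inter_self]
    have e2 : κ A = κ (A ∩ U) := by rw [hκA A hA, hκA _ hAU, Set.inter_assoc, Set.inter_self]
    rw [e1, e2]
    constructor
    · rw [← smul_eq_mul, ← Measure.smul_apply]
      refine measure_le_of_locally_le (U := U) (fun x hx => ?_) hAU Set.inter_subset_right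
      obtain ⟨V, hV, hVA⟩ := exists_nhds_graph_comparison (hφ x hx)
        (hg.continuousAt (hU.mem_nhds hx)) hK
      refine ⟨V, hV, fun B hB hBV hBU => ?_⟩
      rw [Measure.smul_apply, smul_eq_mul, hνA B hB, hκA B hB,
        Set.inter_eq_left.2 hBU]
      exact (hVA B hB hBV).1
    · rw [← smul_eq_mul, ← Measure.smul_apply]
      refine measure_le_of_locally_le (U := U) (fun x hx => ?_) hAU Set.inter_subset_right
      obtain ⟨V, hV, hVA⟩ := exists_nhds_graph_comparison (hφ x hx)
        (hg.continuousAt (hU.mem_nhds hx)) hK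
      refine ⟨V, hV, fun B hB hBV hBU => ?_⟩
      rw [Measure.smul_apply, smul_eq_mul, hνA B hB, hκA B hB,
        Set.inter_eq_left.2 hBU]
      exact (hVA B hB hBV).2
  ext A hA
  exact le_antisymm (ennreal_le_of_forall_one_lt_pow_mul _ fun K hK => (key K hK A hA).1)
    (ennreal_le_of_forall_one_lt_pow_mul _ fun K hK => (key K hK A hA).2)

end area

section level

variable {m : ℕ}

lemma exists_hausdorffMeasure_eq_smul (m : ℕ) :
    ∃ c : ℝ≥0, (μH[(m : ℝ)] : Measure (EuclideanSpace ℝ (Fin m))) = c • volume := by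
  have : Measure.IsAddHaarMeasure (μH[(m : ℝ)] : Measure (EuclideanSpace ℝ (Fin m))) := by
    simpa using isAddHaarMeasure_hausdorffMeasure (E := EuclideanSpace ℝ (Fin m))
  exact ⟨_, Measure.isAddLeftInvariant_eq_smul _ _⟩

lemma waveSymbol_eq (z : Spacetime m) : waveSymbol z = ‖spacePart z‖ ^ 2 - timeCoord z ^ 2 := by
  rw [waveSymbol, norm_sq_eq_spacePart_add]; ring

/-- The part of the level set of height `s` where the time coordinate has the sign of `ε`. -/
def sheet (m : ℕ) (s ε : ℝ) : Set (Spacetime m) :=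
  {z | spacePart z ∈ {ξ : EuclideanSpace ℝ (Fin m) | s < ‖ξ‖ ^ 2} ∧
    timeCoord z = ε * √(‖spacePart z‖ ^ 2 - s)}

lemma measurableSet_sheet (s ε : ℝ) : MeasurableSet (sheet m s ε) := by
  apply MeasurableSet.inter
  · exact (isOpen_lt continuous_const (by fun_prop)).measurableSet
  · exact (isClosed_eq (by fun_prop) (by fun_prop)).measurableSet

lemma disjoint_sheet (s : ℝ) : Disjoint (sheet m s 1) (sheet m s (-1)) := by
  rw [Set.disjoint_left]
  rintro z ⟨h1, h2⟩ ⟨h3, h4⟩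
  have : 0 < √(‖spacePart z‖ ^ 2 - s) := Real.sqrt_pos.2 (sub_pos.2 h1)
  linarith

lemma hausdorffMeasure_timeCoord_eq_zero_inter (hm : 1 ≤ m) (s : ℝ) :
    μH[(m : ℝ)] {z : Spacetime m | timeCoord z = 0 ∧ ‖spacePart z‖ ^ 2 = s} = 0 := by
  have hiso : Isometry fun ξ : EuclideanSpace ℝ (Fin m) => joinTime ξ 0 := by
    refine Isometry.of_dist_eq fun x y => ?_
    rw [dist_eq_norm, dist_eq_norm, joinTime_sub, ← sq_eq_sq₀ (norm_nonneg _) (norm_nonneg _),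
      norm_joinTime_sq]
    simp
  have hsub : {z : Spacetime m | timeCoord z = 0 ∧ ‖spacePart z‖ ^ 2 = s} ⊆
      (fun ξ : EuclideanSpace ℝ (Fin m) => joinTime ξ 0) '' Metric.sphere 0 √s := by
    rintro z ⟨h1, h2⟩
    refine ⟨spacePart z, ?_, ?_⟩
    · rw [mem_sphere_zero_iff_norm, ← h2, Real.sqrt_sq (norm_nonneg _)]
    · simp only
      rw [← h1, joinTime_spacePart]
  refine measure_mono_null hsub ?_
  rw [hiso.hausdorffMeasure_image (Or.inl (Nat.cast_nonneg _))]
  obtain ⟨c, hc⟩ := exists_hausdorffMeasure_eq_smul m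
  have : Nontrivial (EuclideanSpace ℝ (Fin m)) := by
    have : Nonempty (Fin m) := ⟨⟨0, hm⟩⟩
    infer_instance
  rw [hc, Measure.smul_apply, Measure.addHaar_sphere, smul_zero]

lemma levelMeasure_eq_restrict_sheet (hm : 1 ≤ m) (s : ℝ) :
    levelMeasure m s = (μH[(m : ℝ)]).restrict (sheet m s 1 ∪ sheet m s (-1)) := by
  apply Measure.restrict_congr_set
  have hnull := measure_eq_zero_iff_ae_notMem.1 (hausdorffMeasure_timeCoord_eq_zero_inter hm s)
  filter_upwards [hnull] with z hz
  refine propext ⟨?_, ?_⟩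
  · rintro ⟨h1, -⟩
    rw [waveSymbol_eq] at h1
    have ht : timeCoord z ≠ 0 := by
      intro h0
      exact hz ⟨h0, by rw [← h1, h0]; ring⟩
    have hlt : s < ‖spacePart z‖ ^ 2 := by
      have : 0 < timeCoord z ^ 2 := by positivity
      linarith
    have hsq : ‖spacePart z‖ ^ 2 - s = timeCoord z ^ 2 := by linarith
    rcases lt_or_gt_of_ne ht with hneg | hpos
    · refine Or.inr ⟨hlt, ?_⟩
      rw [hsq, Real.sqrt_sq_eq_abs, abs_of_neg hneg]; ring
    · refine Or.inl ⟨hlt, ?_⟩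
      rw [hsq, Real.sqrt_sq_eq_abs, abs_of_pos hpos]; ring
  · have aux : ∀ ε : ℝ, ε ^ 2 = 1 → z ∈ sheet m s ε → waveSymbol z = s ∧ z ≠ 0 := by
      rintro ε hε ⟨h1, h2⟩
      have h1' : s < ‖spacePart z‖ ^ 2 := h1
      have hτ : timeCoord z ^ 2 = ‖spacePart z‖ ^ 2 - s := by
        rw [h2, mul_pow, hε, one_mul, Real.sq_sqrt (by linarith)]
      refine ⟨by rw [waveSymbol_eq, hτ]; ring, ?_⟩
      rintro rfl
      have : timeCoord (0 : Spacetime m) = 0 := by simp [timeCoord]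
      rw [this] at hτ
      linarith
    rintro (h | h)
    · exact aux 1 (by norm_num) h
    · exact aux (-1) (by norm_num) h

lemma hasStrictFDerivAt_sheet {s ε : ℝ} {a : EuclideanSpace ℝ (Fin m)} (ha : s < ‖a‖ ^ 2) :
    HasStrictFDerivAt (fun ξ : EuclideanSpace ℝ (Fin m) => ε * √(‖ξ‖ ^ 2 - s))
      (innerSL ℝ ((ε / √(‖a‖ ^ 2 - s)) • a)) a := by
  have h := (((hasStrictFDerivAt_norm_sq a).sub_const s).sqrt (sub_pos.2 ha).ne').const_mul ε
  convert! h using 1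
  ext v
  simp
  ring

/-- The radial profile of the pullback of `η σ_s` to a sheet, without its Gaussian factor. -/
def profile (Q : ℝ → ℝ) (s t l : ℝ) : ℂ :=
  (Q (2 * l - s) * rexp (π * l) / √(l - s) : ℝ) * Complex.exp (2 * π * Complex.I * (t * √(l - s) : ℝ))

lemma map_spacePart_sheet {s ε : ℝ} (hε : ε ^ 2 = 1) :
    Measure.map spacePart ((μH[(m : ℝ)] : Measure (Spacetime m)).restrict (sheet m s ε)) =
      (μH[(m : ℝ)].restrict {ξ : EuclideanSpace ℝ (Fin m) | s < ‖ξ‖ ^ 2}).withDensity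
        fun ξ => ENNReal.ofReal (√(2 * ‖ξ‖ ^ 2 - s) / √(‖ξ‖ ^ 2 - s)) := by
  have hU : IsOpen {ξ : EuclideanSpace ℝ (Fin m) | s < ‖ξ‖ ^ 2} :=
    isOpen_lt continuous_const (by fun_prop)
  have h := map_spacePart_graph hU (φ := fun ξ => ε * √(‖ξ‖ ^ 2 - s))
    (g := fun ξ => (ε / √(‖ξ‖ ^ 2 - s)) • ξ) (fun a ha => hasStrictFDerivAt_sheet ha) (by
      intro a ha
      have : √(‖a‖ ^ 2 - s) ≠ 0 := (Real.sqrt_pos.2 (sub_pos.2 ha)).ne'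
      exact ContinuousAt.continuousWithinAt (by fun_prop (disch := assumption)))
  rw [sheet, h]
  refine withDensity_congr_ae ?_
  filter_upwards [ae_restrict_mem hU.measurableSet] with ξ hξ
  have h0 : 0 < ‖ξ‖ ^ 2 - s := sub_pos.2 hξ
  congr 1
  rw [← Real.sqrt_div' _ h0.le, norm_smul, mul_pow, Real.norm_eq_abs, sq_abs, div_pow, hε,
    Real.sq_sqrt h0.le]
  congr 1
  field_simp
  ring

/-- A Gaussian modulated by a plane wave. -/
def gaussChar {V : Type*} [NormedAddCommGroup V] [InnerProductSpace ℝ V] (x v : V) : ℂ :=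
  Complex.exp (-(π : ℂ) * (‖v‖ : ℂ) ^ 2 + (2 * π * Complex.I) * (⟪x, v⟫ : ℝ))

lemma sheet_density_mul_eq_profile {η : Spacetime m → ℝ} {Q : ℝ → ℝ}
    (hQ : ∀ z, ‖z‖ * η z = Q (‖z‖ ^ 2)) {s ε : ℝ} (hε : ε ^ 2 = 1) (w : Spacetime m)
    {ξ : EuclideanSpace ℝ (Fin m)} (hξ : s < ‖ξ‖ ^ 2) :
    (√(2 * ‖ξ‖ ^ 2 - s) / √(‖ξ‖ ^ 2 - s)) • ((η (joinTime ξ (ε * √(‖ξ‖ ^ 2 - s))) : ℂ) *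
      Complex.exp (2 * (π : ℂ) * Complex.I * ((⟪joinTime ξ (ε * √(‖ξ‖ ^ 2 - s)), w⟫ : ℝ) : ℂ))) =
    profile Q s (ε * timeCoord w) (‖ξ‖ ^ 2) * gaussChar (spacePart w) ξ := by
  set z := joinTime ξ (ε * √(‖ξ‖ ^ 2 - s)) with hz
  have h0 : 0 < ‖ξ‖ ^ 2 - s := sub_pos.2 hξ
  have hn : ‖z‖ ^ 2 = 2 * ‖ξ‖ ^ 2 - s := by
    rw [hz, norm_joinTime_sq, mul_pow, hε, Real.sq_sqrt h0.le]; ring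
  have hn' : √(2 * ‖ξ‖ ^ 2 - s) = ‖z‖ := by rw [← hn, Real.sqrt_sq (norm_nonneg _)]
  rw [hn', profile, ← hn, ← hQ, gaussChar, inner_eq_spacePart_add, hz, spacePart_joinTime,
    timeCoord_joinTime, ← hz, Complex.real_smul]
  have e1 : Complex.exp (2 * (π : ℂ) * Complex.I *
      ((⟪ξ, spacePart w⟫ + ε * √(‖ξ‖ ^ 2 - s) * timeCoord w : ℝ) : ℂ)) =
      Complex.exp (2 * π * Complex.I * (ε * timeCoord w * √(‖ξ‖ ^ 2 - s) : ℝ)) *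
      (Complex.exp (π * (‖ξ‖ : ℂ) ^ 2) * Complex.exp (-(π : ℂ) * (‖ξ‖ : ℂ) ^ 2 +
        (2 * π * Complex.I) * (⟪spacePart w, ξ⟫ : ℝ))) := by
    rw [← Complex.exp_add, ← Complex.exp_add, real_inner_comm]
    congr 1
    push_cast
    ring
  rw [e1]
  push_cast
  ring

lemma setIntegral_sheet {η : Spacetime m → ℝ} (hη : Continuous η) {Q : ℝ → ℝ}
    (hQ : ∀ z, ‖z‖ * η z = Q (‖z‖ ^ 2)) {c : ℝ≥0}
    (hc : (μH[(m : ℝ)] : Measure (EuclideanSpace ℝ (Fin m))) = c • volume)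
    {s ε : ℝ} (hε : ε ^ 2 = 1) (w : Spacetime m)
    (hint : Integrable fun ξ : EuclideanSpace ℝ (Fin m) =>
      profile Q s (ε * timeCoord w) (‖ξ‖ ^ 2) * gaussChar (spacePart w) ξ) :
    IntegrableOn (fun z => (η z : ℂ) * Complex.exp (2 * (π : ℂ) * Complex.I * ((⟪z, w⟫ : ℝ) : ℂ)))
      (sheet m s ε) μH[(m : ℝ)] ∧
    ∫ z in sheet m s ε, (η z : ℂ) * Complex.exp (2 * (π : ℂ) * Complex.I * ((⟪z, w⟫ : ℝ) : ℂ))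
      ∂μH[(m : ℝ)] =
    c * ∫ ξ, profile Q s (ε * timeCoord w) (‖ξ‖ ^ 2) * gaussChar (spacePart w) ξ := by
  set f : Spacetime m → ℂ :=
    fun z => (η z : ℂ) * Complex.exp (2 * (π : ℂ) * Complex.I * ((⟪z, w⟫ : ℝ) : ℂ)) with hf
  set Φ : EuclideanSpace ℝ (Fin m) → Spacetime m := fun ξ => joinTime ξ (ε * √(‖ξ‖ ^ 2 - s))
  set U := {ξ : EuclideanSpace ℝ (Fin m) | s < ‖ξ‖ ^ 2}
  have hU : MeasurableSet U := (isOpen_lt continuous_const (by fun_prop)).measurableSet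
  have hΦ : Continuous Φ := by
    have : Continuous fun p : EuclideanSpace ℝ (Fin m) × ℝ => joinTime p.1 p.2 := by
      unfold joinTime
      refine (PiLp.continuous_toLp 2 _).comp (continuous_pi fun i => ?_)
      refine Fin.lastCases ?_ (fun j => ?_) i
      · simpa using continuous_snd
      · simp only [Fin.snoc_castSucc]; fun_prop
    exact this.comp (by fun_prop : Continuous fun ξ : EuclideanSpace ℝ (Fin m) =>
      (ξ, ε * √(‖ξ‖ ^ 2 - s)))
  have hfc : Continuous f := by fun_prop
  have hfΦ : ∀ z ∈ sheet m s ε, f (Φ (spacePart z)) = f z := by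
    rintro z ⟨-, h2⟩
    simp only [Φ, ← h2, joinTime_spacePart]
  set D : EuclideanSpace ℝ (Fin m) → ℝ≥0∞ :=
    fun ξ => ENNReal.ofReal (√(2 * ‖ξ‖ ^ 2 - s) / √(‖ξ‖ ^ 2 - s)) with hD
  have hDm : Measurable D := by fun_prop
  have hDt : ∀ μ : Measure (EuclideanSpace ℝ (Fin m)), ∀ᵐ ξ ∂μ, D ξ < ⊤ := fun μ =>
    Eventually.of_forall fun ξ => ENNReal.ofReal_lt_top
  have hmap := map_spacePart_sheet (m := m) (s := s) hε
  set H : EuclideanSpace ℝ (Fin m) → ℂ :=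
    fun ξ => profile Q s (ε * timeCoord w) (‖ξ‖ ^ 2) * gaussChar (spacePart w) ξ with hH
  have hDf : ∀ ξ ∈ U, (D ξ).toReal • f (Φ ξ) = H ξ := by
    intro ξ hξ
    simp only [hD, ENNReal.toReal_ofReal (div_nonneg (Real.sqrt_nonneg _) (Real.sqrt_nonneg _))]
    exact sheet_density_mul_eq_profile hQ hε w hξ
  have hHU : ∀ ξ, ξ ∉ U → H ξ = 0 := by
    intro ξ hξ
    have : √(‖ξ‖ ^ 2 - s) = 0 := Real.sqrt_eq_zero_of_nonpos (sub_nonpos.2 (not_lt.1 hξ))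
    simp [hH, profile, this]
  have hfa : AEStronglyMeasurable (f ∘ Φ)
      (Measure.map spacePart ((μH[(m : ℝ)] : Measure (Spacetime m)).restrict (sheet m s ε))) :=
    (hfc.comp hΦ).aestronglyMeasurable
  have hp := continuous_spacePart (m := m) |>.measurable.aemeasurable
    (μ := (μH[(m : ℝ)] : Measure (Spacetime m)).restrict (sheet m s ε))
  constructor
  · have h1 : Integrable (f ∘ Φ)
        (Measure.map spacePart ((μH[(m : ℝ)] : Measure (Spacetime m)).restrict (sheet m s ε))) := by
      rw [hmap, integrable_withDensity_iff_integrable_smul' hDm (hDt _)]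
      have h2 : IntegrableOn H U μH[(m : ℝ)] := by
        rw [hc]
        exact (hint.smul_measure_nnreal).integrableOn
      exact h2.congr ((ae_restrict_mem hU).mono fun ξ hξ => (hDf ξ hξ).symm)
    rw [integrable_map_measure hfa hp] at h1
    exact h1.congr ((ae_restrict_mem (measurableSet_sheet s ε)).mono fun z hz => hfΦ z hz)
  · calc ∫ z in sheet m s ε, f z ∂μH[(m : ℝ)]
        = ∫ z in sheet m s ε, (f ∘ Φ) (spacePart z) ∂μH[(m : ℝ)] :=
          setIntegral_congr_fun (measurableSet_sheet s ε) fun z hz => (hfΦ z hz).symm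
      _ = ∫ ξ in U, (D ξ).toReal • (f ∘ Φ) ξ ∂μH[(m : ℝ)] := by
          rw [← integral_map hp hfa, hmap, integral_withDensity_eq_integral_toReal_smul hDm (hDt _)]
      _ = ∫ ξ in U, H ξ ∂μH[(m : ℝ)] := setIntegral_congr_fun hU hDf
      _ = ∫ ξ, H ξ ∂μH[(m : ℝ)] := setIntegral_eq_integral_of_forall_compl_eq_zero hHU
      _ = _ := by
          rw [hc, integral_smul_nnreal_measure, NNReal.smul_def, Complex.real_smul]

lemma sigmaCheck_eq (hm : 1 ≤ m) {η : Spacetime m → ℝ} (hη : Continuous η) {Q : ℝ → ℝ}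
    (hQ : ∀ z, ‖z‖ * η z = Q (‖z‖ ^ 2)) {c : ℝ≥0}
    (hc : (μH[(m : ℝ)] : Measure (EuclideanSpace ℝ (Fin m))) = c • volume)
    (s : ℝ) (w : Spacetime m)
    (hint : ∀ t, Integrable fun ξ : EuclideanSpace ℝ (Fin m) =>
      profile Q s t (‖ξ‖ ^ 2) * gaussChar (spacePart w) ξ) :
    sigmaCheck η s w = c *
      ((∫ ξ, profile Q s (timeCoord w) (‖ξ‖ ^ 2) * gaussChar (spacePart w) ξ) +
        ∫ ξ, profile Q s (-timeCoord w) (‖ξ‖ ^ 2) * gaussChar (spacePart w) ξ) := by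
  obtain ⟨i1, h1⟩ := setIntegral_sheet hη hQ hc (s := s) (one_pow 2) w (hint _)
  obtain ⟨i2, h2⟩ := setIntegral_sheet hη hQ hc (s := s) (ε := -1) (by norm_num) w (hint _)
  rw [sigmaCheck, levelMeasure_eq_restrict_sheet hm,
    setIntegral_union (disjoint_sheet s) (measurableSet_sheet s (-1)) i1 i2, h1, h2, one_mul,
    neg_one_mul, mul_add]

end level

section GaussTransform

variable {V : Type*} [NormedAddCommGroup V] [InnerProductSpace ℝ V]

lemma continuous_gaussChar (x : V) : Continuous (gaussChar x) := by
  unfold gaussChar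
  fun_prop

lemma norm_gaussChar (x v : V) : ‖gaussChar x v‖ = rexp (-π * ‖v‖ ^ 2) := by
  rw [gaussChar, Complex.norm_exp]
  congr 1
  simp [← Complex.ofReal_pow]

variable [FiniteDimensional ℝ V] [MeasurableSpace V] [BorelSpace V]

/-- The integral of a modulated Gaussian against the quadratic phase with frequency `u`. -/
def gaussTransform (x : V) (u : ℝ) : ℂ :=
  ∫ v, Complex.exp (2 * π * Complex.I * (u * ‖v‖ ^ 2 : ℝ)) * gaussChar x v

lemma norm_exp_two_pi_I_mul (r : ℝ) : ‖Complex.exp (2 * π * Complex.I * r)‖ = 1 := by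
  have : 2 * π * Complex.I * r = ((2 * π * r : ℝ) : ℂ) * Complex.I := by push_cast; ring
  rw [this, Complex.norm_exp_ofReal_mul_I]

lemma integrable_gaussChar (x : V) : Integrable (gaussChar x) :=
  GaussianFourier.integrable_cexp_neg_mul_sq_norm_add (b := π) (by simpa using pi_pos) _ _

lemma continuous_gaussTransform (x : V) : Continuous (gaussTransform x) := by
  unfold gaussTransform
  refine continuous_of_dominated (bound := fun v => ‖gaussChar x v‖) (fun u => ?_)
    (fun u => ae_of_all _ fun v => ?_) (integrable_gaussChar x).norm
    (ae_of_all _ fun v => by fun_prop)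
  · exact (Continuous.mul (by fun_prop) (continuous_gaussChar x)).aestronglyMeasurable
  · rw [norm_mul, norm_exp_two_pi_I_mul, one_mul]

lemma norm_gaussTransform_le (x : V) (u : ℝ) :
    ‖gaussTransform x u‖ ≤
      2 ^ ((Module.finrank ℝ V : ℝ) / 2) * (1 + |u|) ^ (-((Module.finrank ℝ V : ℝ) / 2)) := by
  set d : ℝ := (Module.finrank ℝ V : ℝ) with hd
  have hd0 : 0 ≤ d / 2 := by positivity
  set b : ℂ := π * (1 - 2 * Complex.I * u) with hb
  have hbre : b.re = π := by simp [hb]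
  have hb0 : 0 < b.re := hbre ▸ pi_pos
  have hbne : b ≠ 0 := fun h => by simp [h] at hb0
  have e : gaussTransform x u = (π / b) ^ ((Module.finrank ℝ V : ℂ) / 2) *
      Complex.exp ((2 * π * Complex.I) ^ 2 * ‖x‖ ^ 2 / (4 * b)) := by
    rw [← GaussianFourier.integral_cexp_neg_mul_sq_norm_add hb0 (2 * π * Complex.I) x]
    unfold gaussTransform gaussChar
    congr 1
    ext v
    rw [← Complex.exp_add, hb]
    congr 1
    push_cast
    ring
  have h1 : ‖Complex.exp ((2 * π * Complex.I) ^ 2 * ‖x‖ ^ 2 / (4 * b))‖ ≤ 1 := by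
    rw [Complex.norm_exp, Real.exp_le_one_iff]
    have : (2 * π * Complex.I) ^ 2 * (‖x‖ : ℂ) ^ 2 / (4 * b) =
        ((-(π ^ 2 * ‖x‖ ^ 2) : ℝ) : ℂ) * b⁻¹ := by
      rw [mul_pow, Complex.I_sq]
      push_cast
      field_simp
      ring
    rw [this, Complex.re_ofReal_mul, Complex.inv_re]
    have : 0 ≤ b.re / Complex.normSq b := div_nonneg hb0.le (Complex.normSq_nonneg _)
    have h2 : 0 ≤ π ^ 2 * ‖x‖ ^ 2 := by positivity
    nlinarith
  have h2 : (1 + |u|) / 2 ≤ ‖b / π‖ := by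
    have e2 : b / π = 1 - 2 * Complex.I * u := by
      rw [hb]; field_simp [pi_ne_zero]
    rw [e2]
    have r1 := Complex.abs_re_le_norm (1 - 2 * Complex.I * u)
    have r2 := Complex.abs_im_le_norm (1 - 2 * Complex.I * u)
    simp [abs_mul] at r1 r2
    linarith
  have h3 : ‖(π / b : ℂ)‖ ≤ ((1 + |u|) / 2)⁻¹ := by
    rw [← inv_div, norm_inv]
    exact inv_anti₀ (by positivity) h2
  have h4 : ‖(π / b : ℂ) ^ ((Module.finrank ℝ V : ℂ) / 2)‖ = ‖(π / b : ℂ)‖ ^ (d / 2) := by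
    rw [← Complex.norm_cpow_real]
    congr 2
    push_cast [hd]
    rfl
  rw [e, norm_mul, h4]
  calc ‖(π / b : ℂ)‖ ^ (d / 2) * _ ≤ (((1 + |u|) / 2)⁻¹) ^ (d / 2) * 1 := by gcongr
    _ = _ := by
      rw [mul_one, inv_div, Real.div_rpow (by norm_num) (by positivity), Real.rpow_neg (by positivity),
        div_eq_mul_inv]

lemma integrable_gaussTransform (x : V) (hd : 3 ≤ Module.finrank ℝ V) :
    Integrable (gaussTransform x) := by
  have hd' : (3 : ℝ) ≤ Module.finrank ℝ V := by exact_mod_cast hd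
  refine Integrable.mono' (g := fun u : ℝ => 2 ^ ((Module.finrank ℝ V : ℝ) / 2) *
    (1 + ‖u‖) ^ (-((Module.finrank ℝ V : ℝ) / 2))) ?_
    (continuous_gaussTransform x).aestronglyMeasurable (ae_of_all _ (norm_gaussTransform_le x))
  exact (integrable_one_add_norm (by simp; linarith)).const_mul _

lemma pow_mul_exp_neg_pi_sq_le (k : ℕ) {y : ℝ} (hy : 0 ≤ y) :
    y ^ k * rexp (-π * y ^ 2) ≤ k.factorial * rexp 1 := by
  have h1 : y ^ k ≤ k.factorial * rexp y := by
    have := Real.pow_div_factorial_le_exp y hy k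
    rwa [div_le_iff₀' (by positivity)] at this
  calc y ^ k * rexp (-π * y ^ 2) ≤ k.factorial * rexp y * rexp (-π * y ^ 2) := by gcongr
    _ = k.factorial * rexp (y + -π * y ^ 2) := by rw [mul_assoc, ← Real.exp_add]
    _ ≤ _ := by
      gcongr
      nlinarith [Real.two_le_pi, sq_nonneg (y - 1), sq_nonneg y]

lemma integrable_comp_norm_sq_mul_gaussChar (hd : 2 ≤ Module.finrank ℝ V) :
    ∃ C : ℝ, 0 ≤ C ∧ ∀ (H : ℝ → ℂ), Integrable H → ∀ x : V,
      Integrable (fun v => H (‖v‖ ^ 2) * gaussChar x v) ∧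
        ∫ v : V, ‖H (‖v‖ ^ 2) * gaussChar x v‖ ≤ C * ∫ l, ‖H l‖ := by
  have : Nontrivial V := Module.nontrivial_of_finrank_pos (R := ℝ) (by lia)
  set d := Module.finrank ℝ V with hd'
  set M : ℝ := (d - 2).factorial * rexp 1 with hM
  refine ⟨d * (volume : Measure V).real (Metric.ball 0 1) * M, by positivity, fun H hH x => ?_⟩
  have hB : IntegrableOn (fun y : ℝ => 2 * y * ‖H (y ^ 2)‖) (Set.Ioi 0) := by
    have := (integrableOn_Ioi_comp_rpow_iff (fun l => ‖H l‖) (p := 2) two_ne_zero).2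
      hH.norm.integrableOn
    refine this.congr_fun (fun y _ => ?_) measurableSet_Ioi
    norm_num
  have hBint : ∫ y in Set.Ioi (0 : ℝ), 2 * y * ‖H (y ^ 2)‖ ≤ ∫ l, ‖H l‖ := by
    have := integral_comp_rpow_Ioi_of_pos (g := fun l => ‖H l‖) (p := 2) two_pos
    norm_num at this
    rw [this]
    exact setIntegral_le_integral hH.norm (ae_of_all _ fun _ => norm_nonneg _)
  have hle : ∀ y ∈ Set.Ioi (0 : ℝ), y ^ (d - 1) • (‖H (y ^ 2)‖ * rexp (-π * y ^ 2)) ≤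
      M * (2 * y * ‖H (y ^ 2)‖) := by
    intro y hy
    have hy' : 0 < y := hy
    have h1 := pow_mul_exp_neg_pi_sq_le (d - 2) hy'.le
    have h2 : d - 1 = d - 2 + 1 := by lia
    rw [h2, pow_succ, smul_eq_mul]
    calc _ = (y ^ (d - 2) * rexp (-π * y ^ 2)) * (y * ‖H (y ^ 2)‖) := by ring
      _ ≤ M * (y * ‖H (y ^ 2)‖) := by gcongr
      _ ≤ M * (2 * y * ‖H (y ^ 2)‖) := by gcongr; linarith
  have hnn : ∀ y ∈ Set.Ioi (0 : ℝ), 0 ≤ y ^ (d - 1) • (‖H (y ^ 2)‖ * rexp (-π * y ^ 2)) :=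
    fun y hy => smul_nonneg (pow_nonneg (le_of_lt hy) _) (by positivity)
  have hcomp : AEStronglyMeasurable (fun y : ℝ => H (y ^ 2)) (volume.restrict (Set.Ioi 0)) := by
    have := (integrableOn_Ioi_comp_rpow_iff H (p := 2) two_ne_zero).2 hH.integrableOn
    have h3 : AEStronglyMeasurable (fun y : ℝ => (2 * y)⁻¹ • ((2 * y) • H (y ^ 2)))
        (volume.restrict (Set.Ioi 0)) := by
      refine AEStronglyMeasurable.smul (f := fun y : ℝ => (2 * y)⁻¹)
        (Measurable.aestronglyMeasurable (by fun_prop)) ?_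
      refine this.aestronglyMeasurable.congr ?_
      filter_upwards with y
      norm_num
    refine h3.congr ?_
    filter_upwards [ae_restrict_mem measurableSet_Ioi] with y hy
    have : (0 : ℝ) < y := hy
    rw [inv_smul_smul₀ (by positivity)]
  have hA : IntegrableOn (fun y : ℝ => y ^ (d - 1) • (‖H (y ^ 2)‖ * rexp (-π * y ^ 2)))
      (Set.Ioi 0) := by
    refine Integrable.mono' (hB.const_mul M) ?_ ?_
    · exact AEStronglyMeasurable.smul (f := fun y : ℝ => y ^ (d - 1)) (by fun_prop)
        (hcomp.norm.mul (g := fun y : ℝ => rexp (-π * y ^ 2)) (by fun_prop))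
    · filter_upwards [ae_restrict_mem measurableSet_Ioi] with y hy
      rw [Real.norm_of_nonneg (hnn y hy)]
      exact hle y hy
  have hA' : IntegrableOn (fun y : ℝ => y ^ (d - 1) • (H (y ^ 2) * (rexp (-π * y ^ 2) : ℂ)))
      (Set.Ioi 0) := by
    refine Integrable.mono' hA ?_ ?_
    · exact AEStronglyMeasurable.smul (f := fun y : ℝ => y ^ (d - 1)) (by fun_prop)
        (hcomp.mul (g := fun y : ℝ => (rexp (-π * y ^ 2) : ℂ))
          (Continuous.aestronglyMeasurable (by fun_prop)))
    · filter_upwards [ae_restrict_mem measurableSet_Ioi] with y hy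
      have : (0 : ℝ) < y := hy
      rw [norm_smul, norm_mul, Complex.norm_real, Real.norm_of_nonneg (Real.exp_pos _).le,
        norm_pow, Real.norm_of_nonneg this.le, smul_eq_mul]
  have hrad := (integrable_fun_norm_addHaar (volume : Measure V)).2 hA'
  have hnorm : ∀ v : V, ‖H (‖v‖ ^ 2) * gaussChar x v‖ = ‖H (‖v‖ ^ 2)‖ * rexp (-π * ‖v‖ ^ 2) :=
    fun v => by rw [norm_mul, norm_gaussChar]
  constructor
  · have h4 : (fun v : V => H (‖v‖ ^ 2) * gaussChar x v) = fun v =>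
        (Complex.exp (2 * π * Complex.I * (⟪x, v⟫ : ℝ))) *
          (H (‖v‖ ^ 2) * (rexp (-π * ‖v‖ ^ 2) : ℂ)) := by
      ext v
      rw [gaussChar, Complex.exp_add]
      push_cast
      ring
    rw [h4]
    refine hrad.bdd_mul (c := 1) (Continuous.aestronglyMeasurable (by fun_prop))
      (ae_of_all _ fun v => (norm_exp_two_pi_I_mul _).le)
  · simp_rw [hnorm]
    rw [integral_fun_norm_addHaar (volume : Measure V)
      (fun y => ‖H (y ^ 2)‖ * rexp (-π * y ^ 2)), nsmul_eq_mul, smul_eq_mul, mul_assoc, mul_assoc]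
    gcongr
    calc _ ≤ ∫ y in Set.Ioi (0 : ℝ), M * (2 * y * ‖H (y ^ 2)‖) :=
          setIntegral_mono_on hA (hB.const_mul M) measurableSet_Ioi hle
      _ ≤ _ := by
        rw [integral_const_mul]
        gcongr

lemma integral_comp_norm_sq_mul_gaussChar_of_schwartz (h : SchwartzMap ℝ ℂ) (x : V) :
    ∫ v : V, h (‖v‖ ^ 2) * gaussChar x v = ∫ u, 𝓕 (h : ℝ → ℂ) u * gaussTransform x u := by
  have hF : Integrable (𝓕 (h : ℝ → ℂ)) := by
    rw [← SchwartzMap.fourier_coe]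
    exact (𝓕 h).integrable
  have hinv : ∀ l : ℝ, h l = ∫ u, Complex.exp (2 * π * Complex.I * (u * l : ℝ)) *
      𝓕 (h : ℝ → ℂ) u := by
    intro l
    have := congrFun (h.continuous.fourierInv_fourier_eq h.integrable hF) l
    rw [← this, Real.fourierInv_eq']
    refine integral_congr_ae (ae_of_all _ fun u => ?_)
    simp only [smul_eq_mul]
    congr 2
    simp
    ring
  simp_rw [hinv, gaussTransform, ← integral_const_mul, ← integral_mul_const]
  rw [integral_integral_swap]
  · refine integral_congr_ae (ae_of_all _ fun u => integral_congr_ae (ae_of_all _ fun v => ?_))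
    ring
  · have := (integrable_gaussChar x).mul_prod hF
    refine (this.bdd_mul (c := 1) (f := fun p : V × ℝ =>
      Complex.exp (2 * π * Complex.I * (p.2 * ‖p.1‖ ^ 2 : ℝ)))
      (Continuous.aestronglyMeasurable (by fun_prop))
      (ae_of_all _ fun v => (norm_exp_two_pi_I_mul _).le)).congr (ae_of_all _ fun p => ?_)
    simp only [Function.uncurry]
    ring

lemma continuous_fourier_of_integrable {f : ℝ → ℂ} (hf : Integrable f) : Continuous (𝓕 f) :=
  VectorFourier.fourierIntegral_continuous Real.continuous_fourierChar
    (by exact continuous_inner) hf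

lemma fourier_sub_of_integrable {f g : ℝ → ℂ} (hf : Integrable f) (hg : Integrable g) (u : ℝ) :
    𝓕 (f - g) u = 𝓕 f u - 𝓕 g u := by
  simp only [Real.fourier_eq]
  rw [← integral_sub ((Real.fourierIntegral_convergent_iff u).2 hf)
    ((Real.fourierIntegral_convergent_iff u).2 hg)]
  simp only [Pi.sub_apply, smul_sub]

lemma integral_comp_norm_sq_mul_gaussChar (hd : 3 ≤ Module.finrank ℝ V) {H : ℝ → ℂ}
    (hH : Integrable H) (x : V) :
    ∫ v : V, H (‖v‖ ^ 2) * gaussChar x v = ∫ u, 𝓕 H u * gaussTransform x u := by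
  obtain ⟨C, hC, hrad⟩ := integrable_comp_norm_sq_mul_gaussChar (V := V) (by lia : 2 ≤ _)
  have hG := integrable_gaussTransform x hd
  set K : ℝ := C + ∫ u, ‖gaussTransform x u‖ with hK
  have hK0 : 0 ≤ K := by positivity
  have hfb : ∀ {f : ℝ → ℂ}, ∀ u, ‖𝓕 f u‖ ≤ ∫ l, ‖f l‖ := fun u =>
    VectorFourier.norm_fourierIntegral_le_integral_norm _ _ _ _ _
  have hfi : ∀ {f : ℝ → ℂ}, Integrable f → Integrable fun u => 𝓕 f u * gaussTransform x u := by
    intro f hf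
    exact hG.bdd_mul (continuous_fourier_of_integrable hf).aestronglyMeasurable
      (ae_of_all _ hfb)
  refine eq_of_forall_dist_le fun ε hε => ?_
  have hε' : 0 < ε / (K + 1) := by positivity
  obtain ⟨g, hg1, hg2, hg3⟩ := (memLp_one_iff_integrable.2 hH).exist_eLpNorm_sub_le
    ENNReal.one_ne_top le_rfl hε'
  set h := hg1.toSchwartzMap hg2 with hh
  have hgi : Integrable g := (h.integrable : Integrable g volume)
  have hsch := integral_comp_norm_sq_mul_gaussChar_of_schwartz h x
  have hsub : ∫ l, ‖(H - g) l‖ ≤ ε / (K + 1) := by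
    rwa [eLpNorm_one_eq_lintegral_enorm, ← ofReal_integral_norm_eq_lintegral_enorm (hH.sub hgi),
      ENNReal.ofReal_le_ofReal_iff hε'.le] at hg3
  have e1 : (∫ v : V, H (‖v‖ ^ 2) * gaussChar x v) - ∫ v : V, g (‖v‖ ^ 2) * gaussChar x v =
      ∫ v : V, (H - g) (‖v‖ ^ 2) * gaussChar x v := by
    rw [← integral_sub (hrad H hH x).1 (hrad g hgi x).1]
    simp only [Pi.sub_apply, sub_mul]
  have e2 : (∫ u, 𝓕 H u * gaussTransform x u) - ∫ u, 𝓕 g u * gaussTransform x u =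
      ∫ u, 𝓕 (H - g) u * gaussTransform x u := by
    rw [← integral_sub (hfi hH) (hfi hgi)]
    simp_rw [fourier_sub_of_integrable hH hgi, sub_mul]
  have e3 : ∫ v : V, g (‖v‖ ^ 2) * gaussChar x v = ∫ u, 𝓕 g u * gaussTransform x u := hsch
  have b1 : ‖∫ v : V, (H - g) (‖v‖ ^ 2) * gaussChar x v‖ ≤ C * (ε / (K + 1)) :=
    (norm_integral_le_integral_norm _).trans
      (((hrad _ (hH.sub hgi) x).2).trans (by gcongr))
  have b2 : ‖∫ u, 𝓕 (H - g) u * gaussTransform x u‖ ≤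
      (∫ u, ‖gaussTransform x u‖) * (ε / (K + 1)) := by
    rw [mul_comm, ← integral_const_mul]
    refine norm_integral_le_of_norm_le (hG.norm.const_mul _) (ae_of_all _ fun u => ?_)
    rw [norm_mul]
    gcongr
    exact (hfb u).trans hsub
  rw [dist_eq_norm]
  calc _ = ‖(∫ v : V, (H - g) (‖v‖ ^ 2) * gaussChar x v) -
        ∫ u, 𝓕 (H - g) u * gaussTransform x u‖ := by
        rw [← e1, ← e2, e3]
        congr 1
        ring
    _ ≤ C * (ε / (K + 1)) + (∫ u, ‖gaussTransform x u‖) * (ε / (K + 1)) :=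
        (norm_sub_le _ _).trans (add_le_add b1 b2)
    _ = K / (K + 1) * ε := by rw [hK]; ring
    _ ≤ 1 * ε := by
        gcongr
        rw [div_le_one (by positivity)]
        linarith
    _ = ε := one_mul ε

end GaussTransform

section Oscillatory

/-- Smooth compactly supported amplitudes, functions of a parameter `s` and a variable `τ`. -/
structure IsAmplitude (k : ℝ × ℝ → ℂ) : Prop where
  contDiff : ContDiff ℝ (⊤ : ℕ∞) k
  hasCompactSupport : HasCompactSupport k

namespace IsAmplitude

variable {k : ℝ × ℝ → ℂ}

lemma fderiv_apply (hk : IsAmplitude k) (v : ℝ × ℝ) : IsAmplitude fun p => fderiv ℝ k p v where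
  contDiff := (hk.contDiff.fderiv_right (m := (⊤ : ℕ∞)) le_rfl).clm_apply contDiff_const
  hasCompactSupport := hk.hasCompactSupport.fderiv_apply (𝕜 := ℝ) v

lemma mul_left (hk : IsAmplitude k) {f : ℝ × ℝ → ℂ} (hf : ContDiff ℝ (⊤ : ℕ∞) f) :
    IsAmplitude fun p => f p * k p where
  contDiff := hf.mul hk.contDiff
  hasCompactSupport := hk.hasCompactSupport.mul_left

lemma ofReal_mul (hk : IsAmplitude k) {f : ℝ × ℝ → ℝ} (hf : ContDiff ℝ (⊤ : ℕ∞) f) :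
    IsAmplitude fun p => (f p : ℂ) * k p :=
  hk.mul_left (Complex.ofRealCLM.contDiff.comp hf)

lemma snd_mul (hk : IsAmplitude k) : IsAmplitude fun p => (p.2 : ℂ) * k p :=
  hk.ofReal_mul contDiff_snd

lemma continuous (hk : IsAmplitude k) : Continuous k := hk.contDiff.continuous

lemma exists_bound (hk : IsAmplitude k) :
    ∃ M : ℝ, 0 ≤ M ∧ ∀ p, ‖k p‖ ≤ M * (1 + p.2 ^ 2)⁻¹ := by
  have h := hk.ofReal_mul (f := fun p => 1 + p.2 ^ 2) (by fun_prop)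
  obtain ⟨M, hM⟩ := h.hasCompactSupport.exists_bound_of_continuous h.continuous
  refine ⟨M, (norm_nonneg _).trans (hM 0), fun p => ?_⟩
  have := hM p
  have hp : 0 < 1 + p.2 ^ 2 := by positivity
  rw [norm_mul, Complex.norm_real, Real.norm_of_nonneg hp.le] at this
  rwa [← div_eq_mul_inv, le_div_iff₀' hp]

lemma continuous_slice (hk : IsAmplitude k) (s : ℝ) : Continuous fun τ => k (s, τ) :=
  hk.continuous.comp (by fun_prop)

lemma integrable_slice (hk : IsAmplitude k) (s : ℝ) : Integrable fun τ => k (s, τ) := by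
  obtain ⟨M, -, hM⟩ := hk.exists_bound
  exact (integrable_inv_one_add_sq.const_mul M).mono' (hk.continuous_slice s).aestronglyMeasurable
    (ae_of_all _ fun τ => hM (s, τ))

lemma exists_integral_norm_le (hk : IsAmplitude k) :
    ∃ M : ℝ, 0 ≤ M ∧ ∀ s, ∫ τ, ‖k (s, τ)‖ ≤ M := by
  obtain ⟨M, hM0, hM⟩ := hk.exists_bound
  refine ⟨M * π, by positivity, fun s => ?_⟩
  rw [← integral_univ_inv_one_add_sq, ← integral_const_mul]
  exact integral_mono (hk.integrable_slice s).norm (integrable_inv_one_add_sq.const_mul M)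
    fun τ => hM (s, τ)

lemma hasDerivAt_snd (hk : IsAmplitude k) (s τ : ℝ) :
    HasDerivAt (fun τ => k (s, τ)) (fderiv ℝ k (s, τ) (0, 1)) τ := by
  have h1 : HasFDerivAt k (fderiv ℝ k (s, τ)) (s, τ) :=
    (hk.contDiff.differentiable (by simp) _).hasFDerivAt
  exact h1.comp_hasDerivAt τ ((hasDerivAt_const τ s).prodMk (hasDerivAt_id τ))

lemma hasDerivAt_fst (hk : IsAmplitude k) (s τ : ℝ) :
    HasDerivAt (fun s => k (s, τ)) (fderiv ℝ k (s, τ) (1, 0)) s := by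
  have h1 : HasFDerivAt k (fderiv ℝ k (s, τ)) (s, τ) :=
    (hk.contDiff.differentiable (by simp) _).hasFDerivAt
  exact h1.comp_hasDerivAt s ((hasDerivAt_id s).prodMk (hasDerivAt_const s τ))

lemma norm_fourier_slice_eq (hk : IsAmplitude k) (s σ : ℝ) :
    ‖𝓕 (fun τ => fderiv ℝ k (s, τ) (0, 1)) σ‖ = 2 * π * |σ| * ‖𝓕 (fun τ => k (s, τ)) σ‖ := by
  have hd : deriv (fun τ => k (s, τ)) = fun τ => fderiv ℝ k (s, τ) (0, 1) :=
    funext fun τ => (hk.hasDerivAt_snd s τ).deriv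
  rw [← hd, Real.fourier_deriv (hk.integrable_slice s)
    (fun τ => (hk.hasDerivAt_snd s τ).differentiableAt)
    (hd ▸ (hk.fderiv_apply (0, 1)).integrable_slice s), norm_smul]
  simp [abs_of_pos pi_pos]

lemma exists_fourier_bound (hk : IsAmplitude k) :
    ∃ M : ℝ, 0 ≤ M ∧ ∀ s σ, ‖𝓕 (fun τ => k (s, τ)) σ‖ ≤ M * (1 + σ ^ 2)⁻¹ := by
  have hk1 := hk.fderiv_apply (0, 1)
  obtain ⟨M, hM0, hM⟩ := hk.exists_integral_norm_le
  obtain ⟨M', hM'0, hM'⟩ := (hk1.fderiv_apply (0, 1)).exists_integral_norm_le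
  refine ⟨M + M', by positivity, fun s σ => ?_⟩
  have h0 : ‖𝓕 (fun τ => k (s, τ)) σ‖ ≤ M :=
    (VectorFourier.norm_fourierIntegral_le_integral_norm _ _ _ _ _).trans (hM s)
  have h2 : 2 * π * |σ| * (2 * π * |σ| * ‖𝓕 (fun τ => k (s, τ)) σ‖) ≤ M' := by
    rw [← hk.norm_fourier_slice_eq, ← hk1.norm_fourier_slice_eq]
    exact (VectorFourier.norm_fourierIntegral_le_integral_norm _ _ _ _ _).trans (hM' s)
  rw [← div_eq_mul_inv, le_div_iff₀ (by positivity)]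
  set X := ‖𝓕 (fun τ => k (s, τ)) σ‖
  have hX : 0 ≤ X * σ ^ 2 := by positivity
  have h3 : 2 * π * |σ| * (2 * π * |σ| * X) = 4 * π ^ 2 * (X * σ ^ 2) := by
    rw [← sq_abs σ]; ring
  have h4 : 1 ≤ 4 * π ^ 2 := by nlinarith [Real.two_le_pi]
  nlinarith

end IsAmplitude

/-- The oscillatory integral with linear frequency `t` and quadratic frequency `-u`. -/
def oscInt (k : ℝ × ℝ → ℂ) (s u t : ℝ) : ℂ :=
  ∫ τ, k (s, τ) * Complex.exp (2 * π * Complex.I * (t * τ - u * τ ^ 2 : ℝ))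

namespace IsAmplitude

variable {k : ℝ × ℝ → ℂ}

lemma integrable_oscInt (hk : IsAmplitude k) (s u t : ℝ) :
    Integrable fun τ => k (s, τ) * Complex.exp (2 * π * Complex.I * (t * τ - u * τ ^ 2 : ℝ)) :=
  (hk.integrable_slice s).mul_bdd (c := 1) (Continuous.aestronglyMeasurable (by fun_prop))
    (ae_of_all _ fun _ => (norm_exp_two_pi_I_mul _).le)

lemma exists_norm_oscInt_le (hk : IsAmplitude k) :
    ∃ C : ℝ, 0 ≤ C ∧ ∀ s u t, ‖oscInt k s u t‖ ≤ C * (1 + |u|) ^ (-(1 / 2) : ℝ) := by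
  have hκ := hk.ofReal_mul (f := fun p => rexp (π * p.2 ^ 2)) (by fun_prop)
  set κ : ℝ × ℝ → ℂ := fun p => ((rexp (π * p.2 ^ 2) : ℝ) : ℂ) * k p with hκdef
  obtain ⟨M, hM0, hM⟩ := hκ.exists_fourier_bound
  refine ⟨M * π * 2 ^ (1 / 2 : ℝ), by positivity, fun s u t => ?_⟩
  have hFi : Integrable (𝓕 fun τ => κ (s, τ)) :=
    (integrable_inv_one_add_sq.const_mul M).mono'
      (continuous_fourier_of_integrable (hκ.integrable_slice s)).aestronglyMeasurable
      (ae_of_all _ fun σ => hM s σ)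
  have hinv := fun τ => congrFun
    ((hκ.continuous_slice s).fourierInv_fourier_eq (hκ.integrable_slice s) hFi) τ
  have hFM := hM s
  set F := 𝓕 (fun τ => κ (s, τ))
  replace hinv : ∀ τ : ℝ, κ (s, τ) =
      ∫ σ, Complex.exp (2 * π * Complex.I * (σ * τ : ℝ)) * F σ := by
    intro τ
    rw [← hinv, Real.fourierInv_eq']
    refine integral_congr_ae (ae_of_all _ fun σ => ?_)
    simp only [smul_eq_mul]
    congr 2
    simp
    ring
  have e : oscInt k s u t = ∫ σ, F σ * gaussTransform (t + σ) (-u) := by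
    have e1 : oscInt k s u t = ∫ τ, κ (s, τ) *
        (Complex.exp (2 * π * Complex.I * (-u * ‖τ‖ ^ 2 : ℝ)) * gaussChar t τ) := by
      refine integral_congr_ae (ae_of_all _ fun τ => ?_)
      simp only [hκdef, gaussChar]
      rw [mul_comm _ (k (s, τ)), mul_assoc (k (s, τ)), Complex.ofReal_exp, ← Complex.exp_add,
        ← Complex.exp_add]
      congr 2
      simp [← Complex.ofReal_pow]
      ring
    rw [e1]
    simp_rw [hinv, gaussTransform, ← integral_const_mul, ← integral_mul_const]
    rw [integral_integral_swap]
    · refine integral_congr_ae (ae_of_all _ fun σ => integral_congr_ae (ae_of_all _ fun τ => ?_))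
      have : gaussChar (t + σ) τ = Complex.exp (2 * π * Complex.I * (σ * τ : ℝ)) * gaussChar t τ := by
        rw [gaussChar, gaussChar, ← Complex.exp_add]
        congr 1
        simp
        ring
      simp only [this]
      ring
    · have := (integrable_gaussChar t).mul_prod hFi
      refine (this.bdd_mul (c := 1) (f := fun p : ℝ × ℝ =>
        Complex.exp (2 * π * Complex.I * (-u * ‖p.1‖ ^ 2 + p.2 * p.1 : ℝ)))
        (Continuous.aestronglyMeasurable (by fun_prop))
        (ae_of_all _ fun v => (norm_exp_two_pi_I_mul _).le)).congr (ae_of_all _ fun p => ?_)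
      simp only [Function.uncurry]
      rw [Complex.ofReal_add, mul_add, Complex.exp_add]
      ring
  rw [e]
  calc _ ≤ ∫ σ : ℝ, (2 ^ (1 / 2 : ℝ) * (1 + |u|) ^ (-(1 / 2) : ℝ)) * (M * (1 + σ ^ 2)⁻¹) := by
        refine norm_integral_le_of_norm_le
          ((integrable_inv_one_add_sq.const_mul M).const_mul _) (ae_of_all _ fun σ => ?_)
        rw [norm_mul, mul_comm]
        gcongr
        · simpa using norm_gaussTransform_le (t + σ) (-u)
        · exact hFM σ
    _ = _ := by
        rw [integral_const_mul, integral_const_mul, integral_univ_inv_one_add_sq]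
        ring

end IsAmplitude

end Oscillatory

section OscillatoryDecay

namespace IsAmplitude

variable {k : ℝ × ℝ → ℂ}

lemma mul_oscInt (hk : IsAmplitude k) (s u t : ℝ) :
    t * oscInt k s u t = 2 * u * oscInt (fun p => (p.2 : ℂ) * k p) s u t -
      (2 * π * Complex.I)⁻¹ * oscInt (fun p => fderiv ℝ k p (0, 1)) s u t := by
  set e : ℝ → ℂ := fun τ => Complex.exp (2 * π * Complex.I * (t * τ - u * τ ^ 2 : ℝ)) with he
  have hd : ∀ τ, HasDerivAt (fun τ => k (s, τ) * e τ)
      (fderiv ℝ k (s, τ) (0, 1) * e τ + 2 * π * Complex.I * t * (k (s, τ) * e τ) -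
        2 * π * Complex.I * (2 * u) * ((τ : ℂ) * k (s, τ) * e τ)) τ := by
    intro τ
    have h1 : HasDerivAt (fun τ : ℝ => t * τ - u * τ ^ 2) (t - u * (2 * τ)) τ := by
      have := ((hasDerivAt_id τ).const_mul t).sub (((hasDerivAt_id τ).pow 2).const_mul u)
      convert! this using 1
      simp
    have h2 := (h1.ofReal_comp.const_mul (2 * π * Complex.I)).cexp
    refine ((hk.hasDerivAt_snd s τ).mul h2).congr_deriv ?_
    simp only [he]
    push_cast
    ring
  have hi0 : Integrable fun τ => k (s, τ) * e τ := hk.integrable_oscInt s u t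
  have hi1 : Integrable fun τ => fderiv ℝ k (s, τ) (0, 1) * e τ :=
    (hk.fderiv_apply (0, 1)).integrable_oscInt s u t
  have hi2 : Integrable fun τ : ℝ => (τ : ℂ) * k (s, τ) * e τ := hk.snd_mul.integrable_oscInt s u t
  have hi01 : Integrable fun τ => fderiv ℝ k (s, τ) (0, 1) * e τ +
      2 * π * Complex.I * t * (k (s, τ) * e τ) := hi1.add (hi0.const_mul _)
  have h := integral_eq_zero_of_hasDerivAt_of_integrable hd (hi01.sub (hi2.const_mul _)) hi0
  rw [integral_sub hi01 (hi2.const_mul _), integral_add hi1 (hi0.const_mul _),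
    integral_const_mul, integral_const_mul] at h
  change oscInt (fun p => fderiv ℝ k p (0, 1)) s u t + _ * oscInt k s u t -
    _ * oscInt (fun p => (p.2 : ℂ) * k p) s u t = 0 at h
  have hpi : (2 * π * Complex.I : ℂ) ≠ 0 := Complex.two_pi_I_ne_zero
  field_simp
  linear_combination h

lemma norm_inv_two_pi_I_mul_le (z : ℂ) : ‖(2 * π * Complex.I : ℂ)⁻¹ * z‖ ≤ ‖z‖ := by
  rw [norm_mul, norm_inv]
  refine mul_le_of_le_one_left (norm_nonneg _) (inv_le_one_of_one_le₀ ?_)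
  simp [abs_of_pos pi_pos]
  linarith [Real.two_le_pi]

lemma exists_pow_mul_norm_oscInt_le (N : ℕ) : ∀ {k : ℝ × ℝ → ℂ}, IsAmplitude k →
    ∃ C : ℝ, 0 ≤ C ∧ ∀ s u t,
      (1 + |t|) ^ N * ‖oscInt k s u t‖ ≤ C * (1 + |u|) ^ N * (1 + |u|) ^ (-(1 / 2) : ℝ) := by
  induction N with
  | zero => intro k hk; simpa using hk.exists_norm_oscInt_le
  | succ N ih =>
    intro k hk
    obtain ⟨C₀, hC₀, h₀⟩ := ih hk
    obtain ⟨C₁, hC₁, h₁⟩ := ih hk.snd_mul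
    obtain ⟨C₂, hC₂, h₂⟩ := ih (hk.fderiv_apply (0, 1))
    refine ⟨C₀ + 2 * C₁ + C₂, by positivity, fun s u t => ?_⟩
    have hb : |t| * ‖oscInt k s u t‖ ≤ 2 * |u| * ‖oscInt (fun p => (p.2 : ℂ) * k p) s u t‖ +
        ‖oscInt (fun p => fderiv ℝ k p (0, 1)) s u t‖ := by
      have := congrArg norm (hk.mul_oscInt s u t)
      rw [norm_mul, Complex.norm_real, Real.norm_eq_abs] at this
      rw [this]
      refine (norm_sub_le _ _).trans (add_le_add (le_of_eq ?_) (norm_inv_two_pi_I_mul_le _))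
      simp
    have hP : 0 ≤ (1 + |u|) ^ N * (1 + |u|) ^ (-(1 / 2) : ℝ) := by positivity
    have hT : 0 ≤ (1 + |t|) ^ N := by positivity
    set P := (1 + |u|) ^ N * (1 + |u|) ^ (-(1 / 2) : ℝ)
    have hu := abs_nonneg u
    calc (1 + |t|) ^ (N + 1) * ‖oscInt k s u t‖
        = (1 + |t|) ^ N * ‖oscInt k s u t‖ + (1 + |t|) ^ N * (|t| * ‖oscInt k s u t‖) := by ring
      _ ≤ (1 + |t|) ^ N * ‖oscInt k s u t‖ + (1 + |t|) ^ N *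
          (2 * |u| * ‖oscInt (fun p => (p.2 : ℂ) * k p) s u t‖ +
            ‖oscInt (fun p => fderiv ℝ k p (0, 1)) s u t‖) := by gcongr
      _ = (1 + |t|) ^ N * ‖oscInt k s u t‖ + 2 * |u| * ((1 + |t|) ^ N *
          ‖oscInt (fun p => (p.2 : ℂ) * k p) s u t‖) + (1 + |t|) ^ N *
            ‖oscInt (fun p => fderiv ℝ k p (0, 1)) s u t‖ := by ring
      _ ≤ C₀ * (1 + |u|) ^ N * (1 + |u|) ^ (-(1 / 2) : ℝ) +
          2 * |u| * (C₁ * (1 + |u|) ^ N * (1 + |u|) ^ (-(1 / 2) : ℝ)) +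
            C₂ * (1 + |u|) ^ N * (1 + |u|) ^ (-(1 / 2) : ℝ) := by
          exact add_le_add (add_le_add (h₀ s u t)
            (mul_le_mul_of_nonneg_left (h₁ s u t) (by positivity))) (h₂ s u t)
      _ = (C₀ + 2 * C₁ * |u| + C₂) * P := by ring
      _ ≤ ((C₀ + 2 * C₁ + C₂) * (1 + |u|)) * P := by
          gcongr
          nlinarith [mul_nonneg hC₀ hu, mul_nonneg hC₂ hu]
      _ = _ := by ring

lemma exists_pow_mul_norm_oscInt_le_of_off_axis {δ : ℝ} (hδ : 0 < δ) (N : ℕ) :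
    ∀ {k : ℝ × ℝ → ℂ}, IsAmplitude k → (∀ p, |p.2| < δ → k p = 0) →
    ∃ C : ℝ, 0 ≤ C ∧ ∀ s u t,
      (1 + |u|) ^ N * ‖oscInt k s u t‖ ≤ C * (1 + |t|) ^ N * (1 + |u|) ^ (-(1 / 2) : ℝ) := by
  induction N with
  | zero => intro k hk _; simpa using hk.exists_norm_oscInt_le
  | succ N ih =>
    intro k hk hk0
    have hopen : IsOpen {p : ℝ × ℝ | |p.2| < δ} := isOpen_lt (by fun_prop) continuous_const
    set k₁ : ℝ × ℝ → ℂ := fun p => ((p.2⁻¹ : ℝ) : ℂ) * k p with hk₁def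
    have hk₁0 : ∀ p : ℝ × ℝ, |p.2| < δ → k₁ p = 0 := fun p hp => by simp [hk₁def, hk0 p hp]
    have hk₁ : IsAmplitude k₁ := by
      refine ⟨contDiff_iff_contDiffAt.2 fun p => ?_, hk.hasCompactSupport.mul_left⟩
      by_cases hp : |p.2| < δ
      · exact (contDiffAt_const (c := 0)).congr_of_eventuallyEq
          (eventually_of_mem (hopen.mem_nhds hp) hk₁0)
      · have : p.2 ≠ 0 := fun h => hp (by simpa [h] using hδ)
        exact (Complex.ofRealCLM.contDiff.contDiffAt.comp p (contDiffAt_snd.inv this)).mul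
          hk.contDiff.contDiffAt
    have hk₁k : (fun p : ℝ × ℝ => (p.2 : ℂ) * k₁ p) = k := by
      ext p
      by_cases hp : p.2 = 0
      · simp [hp, hk0 p (by simpa [hp] using hδ)]
      · simp [hk₁def, hp]
    have hk₂0 : ∀ p : ℝ × ℝ, |p.2| < δ → fderiv ℝ k₁ p (0, 1) = 0 := fun p hp => by
      have : k₁ =ᶠ[𝓝 p] fun _ => 0 := eventually_of_mem (hopen.mem_nhds hp) hk₁0
      simp [this.fderiv_eq]
    obtain ⟨C₀, hC₀, h₀⟩ := ih hk hk0
    obtain ⟨C₁, hC₁, h₁⟩ := ih hk₁ hk₁0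
    obtain ⟨C₂, hC₂, h₂⟩ := ih (hk₁.fderiv_apply (0, 1)) hk₂0
    refine ⟨C₀ + C₁ + C₂, by positivity, fun s u t => ?_⟩
    have hb : |u| * ‖oscInt k s u t‖ ≤ |t| * ‖oscInt k₁ s u t‖ +
        ‖oscInt (fun p => fderiv ℝ k₁ p (0, 1)) s u t‖ := by
      have h := hk₁.mul_oscInt s u t
      rw [hk₁k] at h
      have h' : 2 * u * oscInt k s u t = t * oscInt k₁ s u t +
        (2 * π * Complex.I)⁻¹ * oscInt (fun p => fderiv ℝ k₁ p (0, 1)) s u t := by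
        rw [h]; ring
      have h3 : 2 * |u| * ‖oscInt k s u t‖ = ‖2 * u * oscInt k s u t‖ := by simp
      calc |u| * ‖oscInt k s u t‖ ≤ 2 * |u| * ‖oscInt k s u t‖ := by
            nlinarith [mul_nonneg (abs_nonneg u) (norm_nonneg (oscInt k s u t))]
        _ ≤ _ := by
            rw [h3, h']
            refine (norm_add_le _ _).trans (add_le_add (le_of_eq ?_) (norm_inv_two_pi_I_mul_le _))
            simp
    have hP : 0 ≤ (1 + |t|) ^ N * (1 + |u|) ^ (-(1 / 2) : ℝ) := by positivity
    set P := (1 + |t|) ^ N * (1 + |u|) ^ (-(1 / 2) : ℝ)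
    have ht := abs_nonneg t
    calc (1 + |u|) ^ (N + 1) * ‖oscInt k s u t‖
        = (1 + |u|) ^ N * ‖oscInt k s u t‖ + (1 + |u|) ^ N * (|u| * ‖oscInt k s u t‖) := by ring
      _ ≤ (1 + |u|) ^ N * ‖oscInt k s u t‖ + (1 + |u|) ^ N * (|t| * ‖oscInt k₁ s u t‖ +
            ‖oscInt (fun p => fderiv ℝ k₁ p (0, 1)) s u t‖) := by gcongr
      _ = (1 + |u|) ^ N * ‖oscInt k s u t‖ + |t| * ((1 + |u|) ^ N * ‖oscInt k₁ s u t‖) +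
            (1 + |u|) ^ N * ‖oscInt (fun p => fderiv ℝ k₁ p (0, 1)) s u t‖ := by ring
      _ ≤ C₀ * (1 + |t|) ^ N * (1 + |u|) ^ (-(1 / 2) : ℝ) +
          |t| * (C₁ * (1 + |t|) ^ N * (1 + |u|) ^ (-(1 / 2) : ℝ)) +
            C₂ * (1 + |t|) ^ N * (1 + |u|) ^ (-(1 / 2) : ℝ) := by
          exact add_le_add (add_le_add (h₀ s u t)
            (mul_le_mul_of_nonneg_left (h₁ s u t) (by positivity))) (h₂ s u t)
      _ = (C₀ + C₁ * |t| + C₂) * P := by ring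
      _ ≤ ((C₀ + C₁ + C₂) * (1 + |t|)) * P := by
          gcongr
          nlinarith [mul_nonneg hC₀ ht, mul_nonneg hC₂ ht]
      _ = _ := by ring

lemma hasDerivAt_oscInt (hk : IsAmplitude k) (s u t : ℝ) :
    HasDerivAt (fun s => oscInt k s u t) (oscInt (fun p => fderiv ℝ k p (1, 0)) s u t) s := by
  have hk' := hk.fderiv_apply (1, 0)
  obtain ⟨M, -, hM⟩ := hk'.exists_bound
  refine (hasDerivAt_integral_of_dominated_loc_of_deriv_le (s := Set.univ)
    (bound := fun τ => M * (1 + τ ^ 2)⁻¹) univ_mem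
    (.of_forall fun s => (hk.integrable_oscInt s u t).aestronglyMeasurable)
    (hk.integrable_oscInt s u t) (hk'.integrable_oscInt s u t).aestronglyMeasurable
    (ae_of_all _ fun τ s _ => ?_) (integrable_inv_one_add_sq.const_mul M)
    (ae_of_all _ fun τ s _ => (hk.hasDerivAt_fst s τ).mul_const _)).2
  rw [norm_mul, norm_exp_two_pi_I_mul, mul_one]
  exact hM (s, τ)

end IsAmplitude

/-- The oscillatory integral modulated in the parameter `s` with frequency `-u`. -/
def modOscInt (k : ℝ × ℝ → ℂ) (s u t : ℝ) : ℂ :=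
  Complex.exp (2 * π * Complex.I * (-(u * s) : ℝ)) * oscInt k s u t

lemma norm_modOscInt (k : ℝ × ℝ → ℂ) (s u t : ℝ) : ‖modOscInt k s u t‖ = ‖oscInt k s u t‖ := by
  rw [modOscInt, norm_mul, norm_exp_two_pi_I_mul, one_mul]

lemma IsAmplitude.hasDerivAt_modOscInt {k : ℝ × ℝ → ℂ} (hk : IsAmplitude k) (s u t : ℝ) :
    HasDerivAt (fun s => modOscInt k s u t) (modOscInt (fun p => fderiv ℝ k p (1, 0)) s u t -
      2 * π * Complex.I * u * modOscInt k s u t) s := by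
  have h1 : HasDerivAt (fun s : ℝ => -(u * s)) (-u) s := 
    ((hasDerivAt_id s).const_mul u).neg.congr_deriv (by simp)
  have h2 := (h1.ofReal_comp.const_mul (2 * π * Complex.I)).cexp
  refine (h2.mul (hk.hasDerivAt_oscInt s u t)).congr_deriv ?_
  simp only [modOscInt]
  push_cast
  ring

lemma norm_second_difference_le {f f' f'' : ℝ → ℂ} {K : ℝ} (h1 : ∀ s, HasDerivAt f (f' s) s)
    (h2 : ∀ s, HasDerivAt f' (f'' s) s) (hK : ∀ s, ‖f'' s‖ ≤ K) (s : ℝ) :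
    ‖f s - 2 * f 0 + f (-s)‖ ≤ 2 * K * s ^ 2 := by
  have hK0 : 0 ≤ K := (norm_nonneg _).trans (hK 0)
  have hf' : ∀ r, ‖f' r - f' (-r)‖ ≤ 2 * K * |r| := fun r => by
    have := Convex.norm_image_sub_le_of_norm_hasDerivWithin_le (f := f') (f' := f'') (s := Set.univ)
      (x := -r) (y := r) (fun x _ => (h2 x).hasDerivWithinAt) (fun x _ => hK x) convex_univ
      trivial trivial
    rw [Real.norm_eq_abs, sub_neg_eq_add, ← two_mul, abs_mul, abs_two] at this
    linarith
  have hg : ∀ r, HasDerivAt (fun r => f r + f (-r)) (f' r - f' (-r)) r := fun r => by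
    have h3 := (h1 (-r)).scomp r (hasDerivAt_neg r)
    refine ((h1 r).add h3).congr_deriv ?_
    simp [sub_eq_add_neg]
  have := Convex.norm_image_sub_le_of_norm_hasDerivWithin_le (s := Set.Icc (-|s|) |s|)
    (x := 0) (y := s) (C := 2 * K * |s|) (fun x _ => (hg x).hasDerivWithinAt)
    (fun x hx => (hf' x).trans (mul_le_mul_of_nonneg_left (abs_le.2 hx) (by positivity))) (convex_Icc _ _)
    (by simp) (abs_le.1 le_rfl)
  rw [sub_zero, Real.norm_eq_abs, mul_assoc, ← sq, sq_abs, neg_zero] at this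
  convert! this using 2
  ring

end OscillatoryDecay

section GlobalBounds

lemma le_of_two_regimes {X C T v u a : ℝ} {N p : ℕ} (hC : 0 ≤ C) (hT : 0 < T) (hv : 0 < v)
    (huv : |u| ≤ v) (hN : 0 ≤ a + N) (hp : a + 2 ≤ p) (h1 : X ≤ C * ((v / T) ^ N * v ^ a))
    (h2 : X ≤ C * ((T / v) ^ p * v ^ a)) :
    X ≤ 2 * C * T ^ a * (1 + (u / T) ^ 2)⁻¹ := by
  set ρ := v / T with hρ
  have hρ0 : 0 < ρ := by positivity
  have hvρ : v = T * ρ := by rw [hρ]; field_simp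
  have hva : v ^ a = T ^ a * ρ ^ a := by rw [hvρ, Real.mul_rpow hT.le hρ0.le]
  have hu : (u / T) ^ 2 ≤ ρ ^ 2 := by
    rw [hρ, div_pow, div_pow, ← sq_abs u]
    gcongr
  have hTa : 0 ≤ C * T ^ a := by positivity
  suffices h : X ≤ C * T ^ a * (2 * (1 + (u / T) ^ 2)⁻¹) by linarith
  rcases le_total ρ 1 with hρ1 | hρ1
  · have h3 : ρ ^ N * ρ ^ a ≤ 1 := by
      rw [← Real.rpow_natCast, ← Real.rpow_add hρ0]
      exact Real.rpow_le_one hρ0.le hρ1 (by linarith)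
    have h4 : 1 ≤ 2 * (1 + (u / T) ^ 2)⁻¹ := by
      rw [← div_eq_mul_inv, le_div_iff₀ (by positivity)]
      nlinarith
    calc X ≤ C * T ^ a * (ρ ^ N * ρ ^ a) := by rw [hva] at h1; linarith
      _ ≤ C * T ^ a * (2 * (1 + (u / T) ^ 2)⁻¹) :=
        mul_le_mul_of_nonneg_left (h3.trans h4) hTa
  · have h3 : (T / v) ^ p * ρ ^ a ≤ ρ ^ (-2 : ℝ) := by
      rw [← inv_div, ← hρ, inv_pow, ← Real.rpow_natCast, ← Real.rpow_neg hρ0.le,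
        ← Real.rpow_add hρ0]
      exact Real.rpow_le_rpow_of_exponent_le hρ1 (by linarith)
    have h4 : ρ ^ (-2 : ℝ) ≤ 2 * (1 + (u / T) ^ 2)⁻¹ := by
      rw [Real.rpow_neg hρ0.le, ← div_eq_mul_inv, le_div_iff₀ (by positivity),
        inv_mul_le_iff₀ (by positivity)]
      norm_num
      nlinarith
    calc X ≤ C * T ^ a * ((T / v) ^ p * ρ ^ a) := by rw [hva] at h2; linarith
      _ ≤ C * T ^ a * (2 * (1 + (u / T) ^ 2)⁻¹) :=
        mul_le_mul_of_nonneg_left (h3.trans h4) hTa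

lemma norm_integral_le_of_two_regimes {F : ℝ → ℂ} {C T a : ℝ} {N p : ℕ} (hC : 0 ≤ C) (hT : 0 < T)
    (hN : 0 ≤ a + N) (hp : a + 2 ≤ p)
    (h1 : ∀ u, ‖F u‖ ≤ C * (((1 + |u|) / T) ^ N * (1 + |u|) ^ a))
    (h2 : ∀ u, ‖F u‖ ≤ C * ((T / (1 + |u|)) ^ p * (1 + |u|) ^ a)) :
    ‖∫ u, F u‖ ≤ 2 * π * C * T ^ (a + 1) := by
  calc ‖∫ u, F u‖ ≤ ∫ u, 2 * C * T ^ a * (1 + (u / T) ^ 2)⁻¹ := by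
        refine norm_integral_le_of_norm_le
          ((integrable_inv_one_add_sq.comp_div hT.ne').const_mul _) (ae_of_all _ fun u => ?_)
        exact le_of_two_regimes hC hT (by positivity) (by linarith) hN hp (h1 u) (h2 u)
    _ = _ := by
        rw [integral_const_mul, Measure.integral_comp_div (fun x : ℝ => (1 + x ^ 2)⁻¹) T,
          integral_univ_inv_one_add_sq, abs_of_pos hT, Real.rpow_add_one hT.ne', smul_eq_mul]
        ring

namespace IsAmplitude

variable {k : ℝ × ℝ → ℂ}

lemma exists_norm_oscInt_le_pow (hk : IsAmplitude k) (N : ℕ) : ∃ C : ℝ, 0 ≤ C ∧ ∀ s u t,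
    ‖oscInt k s u t‖ ≤ C * (((1 + |u|) / (1 + |t|)) ^ N * (1 + |u|) ^ (-(1 / 2) : ℝ)) := by
  obtain ⟨C, hC, h⟩ := exists_pow_mul_norm_oscInt_le N hk
  refine ⟨C, hC, fun s u t => ?_⟩
  have hT : 0 < (1 + |t|) ^ N := by positivity
  refine le_of_mul_le_mul_left ((h s u t).trans_eq ?_) hT
  rw [div_pow]
  field_simp

lemma exists_norm_oscInt_le_pow_of_off_axis (hk : IsAmplitude k) {δ : ℝ} (hδ : 0 < δ)
    (hk0 : ∀ p, |p.2| < δ → k p = 0) (N : ℕ) : ∃ C : ℝ, 0 ≤ C ∧ ∀ s u t,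
    ‖oscInt k s u t‖ ≤ C * (((1 + |t|) / (1 + |u|)) ^ N * (1 + |u|) ^ (-(1 / 2) : ℝ)) := by
  obtain ⟨C, hC, h⟩ := exists_pow_mul_norm_oscInt_le_of_off_axis hδ N hk hk0
  refine ⟨C, hC, fun s u t => ?_⟩
  have hT : 0 < (1 + |u|) ^ N := by positivity
  refine le_of_mul_le_mul_left ((h s u t).trans_eq ?_) hT
  rw [div_pow]
  field_simp

lemma norm_second_difference_modOscInt_le (hk : IsAmplitude k) {u t W C₀ C₁ C₂ : ℝ} (hW : 0 ≤ W)
    (hC₀ : 0 ≤ C₀) (hC₁ : 0 ≤ C₁) (hC₂ : 0 ≤ C₂) (h₀ : ∀ s, ‖oscInt k s u t‖ ≤ C₀ * W)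
    (h₁ : ∀ s, ‖oscInt (fun p => fderiv ℝ k p (1, 0)) s u t‖ ≤ C₁ * W)
    (h₂ : ∀ s, ‖oscInt (fun p => fderiv ℝ (fun p => fderiv ℝ k p (1, 0)) p (1, 0)) s u t‖ ≤ C₂ * W)
    (s : ℝ) :
    ‖modOscInt k s u t - 2 * modOscInt k 0 u t + modOscInt k (-s) u t‖ ≤
      2 * ((C₂ + 4 * π * C₁ + 4 * π ^ 2 * C₀) * ((1 + |u|) ^ 2 * W)) * s ^ 2 := by
  have hk' := hk.fderiv_apply (1, 0)
  refine norm_second_difference_le (fun s => hk.hasDerivAt_modOscInt s u t)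
    (fun s => (hk'.hasDerivAt_modOscInt s u t).sub
      ((hk.hasDerivAt_modOscInt s u t).const_mul (2 * π * Complex.I * u))) (fun s => ?_) s
  have hu := abs_nonneg u
  have hc : ‖(2 * π * Complex.I * u : ℂ)‖ = 2 * π * |u| := by simp [abs_of_pos pi_pos]
  have n₀ := h₀ s
  have n₁ := h₁ s
  have n₂ := h₂ s
  rw [← norm_modOscInt] at n₀ n₁ n₂
  calc _ ≤ (C₂ * W + 2 * π * |u| * (C₁ * W)) +
        2 * π * |u| * (C₁ * W + 2 * π * |u| * (C₀ * W)) := by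
        refine (norm_sub_le _ _).trans (add_le_add ((norm_sub_le _ _).trans ?_) ?_)
        · rw [norm_mul, hc]
          gcongr
        · rw [norm_mul, hc]
          gcongr
          refine (norm_sub_le _ _).trans ?_
          rw [norm_mul, hc]
          gcongr
    _ = (C₂ * 1 + 4 * π * C₁ * |u| + 4 * π ^ 2 * C₀ * |u| ^ 2) * W := by ring
    _ ≤ (C₂ * (1 + |u|) ^ 2 + 4 * π * C₁ * (1 + |u|) ^ 2 + 4 * π ^ 2 * C₀ * (1 + |u|) ^ 2) * W := by
        gcongr <;> nlinarith
    _ = _ := by ring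

end IsAmplitude

variable {m : ℕ}

lemma norm_gaussTransform_euclidean_le (x : EuclideanSpace ℝ (Fin m)) (u : ℝ) :
    ‖gaussTransform x u‖ ≤ 2 ^ ((m : ℝ) / 2) * (1 + |u|) ^ (-((m : ℝ) / 2)) := by
  simpa using norm_gaussTransform_le x u

lemma IsAmplitude.exists_norm_integral_modOscInt_le (hm : 3 ≤ m) {k : ℝ × ℝ → ℂ}
    (hk : IsAmplitude k) : ∃ C : ℝ, 0 ≤ C ∧ ∀ (x : EuclideanSpace ℝ (Fin m)) (s t : ℝ),
      ‖∫ u, modOscInt k s u t * gaussTransform x u‖ ≤ C * (1 + |t|) ^ ((1 - (m : ℝ)) / 2) := by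
  have hm' : (3 : ℝ) ≤ m := by exact_mod_cast hm
  obtain ⟨C₁, hC₁, h₁⟩ := hk.exists_norm_oscInt_le_pow m
  obtain ⟨C₂, hC₂, h₂⟩ := hk.exists_norm_oscInt_le_pow 0
  refine ⟨2 * π * ((C₁ + C₂) * 2 ^ ((m : ℝ) / 2)), by positivity, fun x s t => ?_⟩
  have key : ∀ {N : ℕ} {C T u : ℝ}, 0 ≤ C → C ≤ C₁ + C₂ → 0 ≤ T →
      ‖oscInt k s u t‖ ≤ C * (T ^ N * (1 + |u|) ^ (-(1 / 2) : ℝ)) →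
      ‖modOscInt k s u t * gaussTransform x u‖ ≤ ((C₁ + C₂) * 2 ^ ((m : ℝ) / 2)) *
        (T ^ N * (1 + |u|) ^ (-((m : ℝ) + 1) / 2)) := by
    intro N C T u hC hCC hT h
    have hu : 0 < 1 + |u| := by positivity
    calc _ ≤ ((C₁ + C₂) * (T ^ N * (1 + |u|) ^ (-(1 / 2) : ℝ))) *
          (2 ^ ((m : ℝ) / 2) * (1 + |u|) ^ (-((m : ℝ) / 2))) := by
          rw [norm_mul, norm_modOscInt]
          gcongr
          · exact h.trans (by gcongr)
          · exact norm_gaussTransform_euclidean_le x u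
      _ = ((C₁ + C₂) * 2 ^ ((m : ℝ) / 2)) *
          (T ^ N * ((1 + |u|) ^ (-(1 / 2) : ℝ) * (1 + |u|) ^ (-((m : ℝ) / 2)))) := by ring
      _ = _ := by
          rw [← Real.rpow_add hu]
          congr 3
          ring
  have := norm_integral_le_of_two_regimes (F := fun u => modOscInt k s u t * gaussTransform x u)
    (C := (C₁ + C₂) * 2 ^ ((m : ℝ) / 2)) (T := 1 + |t|) (a := -((m : ℝ) + 1) / 2) (N := m) (p := 0)
    (by positivity) (by positivity) (by linarith) (by push_cast; linarith)
    (fun u => key hC₁ (by linarith) (by positivity) (h₁ s u t))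
    (fun u => key hC₂ (by linarith) (by positivity) (by simpa using h₂ s u t))
  convert! this using 3
  ring

lemma IsAmplitude.exists_norm_integral_second_difference_le (hm : 3 ≤ m) {k : ℝ × ℝ → ℂ}
    (hk : IsAmplitude k) {δ : ℝ} (hδ : 0 < δ) (hk0 : ∀ p, |p.2| < δ → k p = 0) :
    ∃ C : ℝ, 0 ≤ C ∧ ∀ (x : EuclideanSpace ℝ (Fin m)) (s t : ℝ),
      ‖∫ u, (modOscInt k s u t - 2 * modOscInt k 0 u t + modOscInt k (-s) u t) *
        gaussTransform x u‖ ≤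
        C * (1 + |t|) ^ ((1 - (m : ℝ)) / 2) * ((1 + |t|) ^ 2 * s ^ 2) := by
  have hm' : (3 : ℝ) ≤ m := by exact_mod_cast hm
  have hopen : IsOpen {p : ℝ × ℝ | |p.2| < δ} := isOpen_lt (by fun_prop) continuous_const
  have hvan : ∀ {k : ℝ × ℝ → ℂ}, (∀ p, |p.2| < δ → k p = 0) →
      ∀ p : ℝ × ℝ, |p.2| < δ → fderiv ℝ k p (1, 0) = 0 := fun {k} h p hp => by
    have : k =ᶠ[𝓝 p] fun _ => 0 := eventually_of_mem (hopen.mem_nhds hp) h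
    simp [this.fderiv_eq]
  have hk1 := hk.fderiv_apply (1, 0)
  have hk2 := hk1.fderiv_apply (1, 0)
  obtain ⟨C₀, hC₀, h₀⟩ := hk.exists_norm_oscInt_le_pow m
  obtain ⟨C₁, hC₁, h₁⟩ := hk1.exists_norm_oscInt_le_pow m
  obtain ⟨C₂, hC₂, h₂⟩ := hk2.exists_norm_oscInt_le_pow m
  obtain ⟨D₀, hD₀, d₀⟩ := hk.exists_norm_oscInt_le_pow_of_off_axis hδ hk0 m
  obtain ⟨D₁, hD₁, d₁⟩ := hk1.exists_norm_oscInt_le_pow_of_off_axis hδ (hvan hk0) m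
  obtain ⟨D₂, hD₂, d₂⟩ := hk2.exists_norm_oscInt_le_pow_of_off_axis hδ (hvan (hvan hk0)) m
  set C := C₂ + 4 * π * C₁ + 4 * π ^ 2 * C₀ with hCdef
  set D := D₂ + 4 * π * D₁ + 4 * π ^ 2 * D₀ with hDdef
  have hC : 0 ≤ C := by positivity
  have hD : 0 ≤ D := by positivity
  refine ⟨2 * π * (2 * (C + D) * 2 ^ ((m : ℝ) / 2)), by positivity, fun x s t => ?_⟩
  set Δ : ℝ → ℂ := fun u => modOscInt k s u t - 2 * modOscInt k 0 u t + modOscInt k (-s) u t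
  have key : ∀ {E T u : ℝ}, 0 ≤ E → E ≤ C + D → 0 ≤ T →
      ‖Δ u‖ ≤ 2 * (E * ((1 + |u|) ^ 2 * (T ^ m * (1 + |u|) ^ (-(1 / 2) : ℝ)))) * s ^ 2 →
      ‖Δ u * gaussTransform x u‖ ≤ (2 * (C + D) * 2 ^ ((m : ℝ) / 2) * s ^ 2) *
        (T ^ m * (1 + |u|) ^ ((3 - (m : ℝ)) / 2)) := by
    intro E T u hE hEE hT h
    have hu : 0 < 1 + |u| := by positivity
    calc _ ≤ (2 * ((C + D) * ((1 + |u|) ^ 2 * (T ^ m * (1 + |u|) ^ (-(1 / 2) : ℝ)))) * s ^ 2) *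
          (2 ^ ((m : ℝ) / 2) * (1 + |u|) ^ (-((m : ℝ) / 2))) := by
          rw [norm_mul]
          gcongr
          · exact h.trans (by gcongr)
          · exact norm_gaussTransform_euclidean_le x u
      _ = (2 * (C + D) * 2 ^ ((m : ℝ) / 2) * s ^ 2) *
          (T ^ m * ((1 + |u|) ^ (2 : ℝ) * (1 + |u|) ^ (-(1 / 2) : ℝ) *
            (1 + |u|) ^ (-((m : ℝ) / 2)))) := by
          rw [Real.rpow_two]
          ring
      _ = _ := by
          rw [← Real.rpow_add hu, ← Real.rpow_add hu]
          congr 3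
          ring
  have := norm_integral_le_of_two_regimes (F := fun u => Δ u * gaussTransform x u)
    (C := 2 * (C + D) * 2 ^ ((m : ℝ) / 2) * s ^ 2) (T := 1 + |t|) (a := (3 - (m : ℝ)) / 2)
    (N := m) (p := m) (by positivity) (by positivity) (by linarith) (by linarith)
    (fun u => key hC (by linarith) (by positivity)
      (hk.norm_second_difference_modOscInt_le (by positivity) hC₀ hC₁ hC₂ (fun s => h₀ s u t)
        (fun s => h₁ s u t) (fun s => h₂ s u t) s))
    (fun u => key hD (by linarith) (by positivity)
      (hk.norm_second_difference_modOscInt_le (by positivity) hD₀ hD₁ hD₂ (fun s => d₀ s u t)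
        (fun s => d₁ s u t) (fun s => d₂ s u t) s))
  have hT : 0 < 1 + |t| := by positivity
  have e : (1 + |t|) ^ ((3 - (m : ℝ)) / 2 + 1) =
      (1 + |t|) ^ ((1 - (m : ℝ)) / 2) * (1 + |t|) ^ 2 := by
    rw [← Real.rpow_two, ← Real.rpow_add hT]
    congr 1
    ring
  rw [e] at this
  convert! this using 1
  ring

end GlobalBounds

section Representation

variable {m : ℕ}

lemma exists_contDiff_radialProfile {η : Spacetime m → ℝ} (hηsm : ContDiff ℝ (⊤ : ℕ∞) η)
    (hηrad : ∀ z z' : Spacetime m, ‖z‖ = ‖z'‖ → η z = η z')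
    (hηsupp : ∀ z : Spacetime m, η z ≠ 0 → 1 / 4 ≤ ‖z‖ ∧ ‖z‖ ≤ 5 / 4) :
    ∃ Q : ℝ → ℝ, ContDiff ℝ (⊤ : ℕ∞) Q ∧ (∀ z, ‖z‖ * η z = Q (‖z‖ ^ 2)) ∧
      ∀ l, Q l ≠ 0 → 1 / 16 ≤ l ∧ l ≤ 25 / 16 := by
  set e : Spacetime m := EuclideanSpace.single 0 1 with he
  have hnorm : ∀ l : ℝ, ‖√l • e‖ = √l := fun l => by
    rw [norm_smul, he, PiLp.norm_single]
    simp [abs_of_nonneg]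
  have hsupp : ∀ l, √l * η (√l • e) ≠ 0 → 1 / 16 ≤ l ∧ l ≤ 25 / 16 := by
    intro l hl
    obtain ⟨h1, h2⟩ := hηsupp _ (right_ne_zero_of_mul hl)
    rw [hnorm] at h1 h2
    have hl0 : 0 ≤ l := (Real.sqrt_pos.1 (by linarith)).le
    have h3 := Real.sq_sqrt hl0
    constructor <;> nlinarith
  refine ⟨fun l => √l * η (√l • e), contDiff_iff_contDiffAt.2 fun l => ?_, fun z => ?_, hsupp⟩
  · rcases lt_or_ge l (1 / 16) with hl | hl
    · refine (contDiffAt_const (c := 0)).congr_of_eventuallyEq ?_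
      filter_upwards [Iio_mem_nhds hl] with l' hl'
      by_contra h
      exact absurd (hsupp l' h).1 (not_le.2 hl')
    · have hs : ContDiffAt ℝ (⊤ : ℕ∞) (fun l : ℝ => √l) l :=
        Real.contDiffAt_sqrt (by linarith)
      exact hs.mul (hηsm.contDiffAt.comp l (hs.smul contDiffAt_const))
  · simp only [Real.sqrt_sq (norm_nonneg z)]
    rw [hηrad z (‖z‖ • e)]
    rw [← Real.sqrt_sq (norm_nonneg z), hnorm]

/-- The amplitude arising from `Q` by the substitution `l = τ ^ 2 + s`, cut off in `s`. -/
def radialAmplitude (Q : ℝ → ℝ) (χ : ContDiffBump (0 : ℝ)) (p : ℝ × ℝ) : ℂ :=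
  (χ p.1 * (2 * Q (2 * p.2 ^ 2 + p.1) * rexp (π * (p.2 ^ 2 + p.1))) : ℝ)

lemma isAmplitude_radialAmplitude {Q : ℝ → ℝ} (hQ : ContDiff ℝ (⊤ : ℕ∞) Q)
    (hsupp : ∀ l, Q l ≠ 0 → 1 / 16 ≤ l ∧ l ≤ 25 / 16) (χ : ContDiffBump (0 : ℝ)) :
    IsAmplitude (radialAmplitude Q χ) where
  contDiff := by
    have h1 : ContDiff ℝ (⊤ : ℕ∞) fun p : ℝ × ℝ => χ p.1 := χ.contDiff.comp contDiff_fst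
    have h2 : ContDiff ℝ (⊤ : ℕ∞) fun p : ℝ × ℝ => Q (2 * p.2 ^ 2 + p.1) := hQ.comp (by fun_prop)
    have h3 : ContDiff ℝ (⊤ : ℕ∞) fun p : ℝ × ℝ => rexp (π * (p.2 ^ 2 + p.1)) := by fun_prop
    exact Complex.ofRealCLM.contDiff.comp (h1.mul ((contDiff_const.mul h2).mul h3))
  hasCompactSupport := by
    refine HasCompactSupport.intro (K := Set.Icc (-χ.rOut) χ.rOut ×ˢ
      Set.Icc (-(2 + χ.rOut)) (2 + χ.rOut)) (isCompact_Icc.prod isCompact_Icc) fun p hp => ?_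
    by_contra h
    have hr := χ.rOut_pos
    have h1 : χ p.1 ≠ 0 := fun h0 => h (by simp [radialAmplitude, h0])
    have h2 : Q (2 * p.2 ^ 2 + p.1) ≠ 0 := fun h0 => h (by simp [radialAmplitude, h0])
    have h3 : |p.1| < χ.rOut := by
      have : p.1 ∈ Function.support χ := h1
      rwa [χ.support_eq, mem_ball_zero_iff] at this
    have h4 := (hsupp _ h2).2
    have h5 := abs_lt.1 h3
    refine hp ⟨abs_le.1 h3.le, abs_le.1 (abs_le_of_sq_le_sq ?_ (by linarith))⟩
    nlinarith

lemma radialAmplitude_of_abs_le (Q : ℝ → ℝ) (χ : ContDiffBump (0 : ℝ)) {s : ℝ} (hs : |s| ≤ χ.rIn)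
    (τ : ℝ) : radialAmplitude Q χ (s, τ) =
      (2 * Q (2 * τ ^ 2 + s) * rexp (π * (τ ^ 2 + s)) : ℝ) := by
  rw [radialAmplitude, χ.one_of_mem_closedBall (by simpa using hs), one_mul]

lemma radialAmplitude_eq_zero {Q : ℝ → ℝ} (hsupp : ∀ l, Q l ≠ 0 → 1 / 16 ≤ l ∧ l ≤ 25 / 16)
    {χ : ContDiffBump (0 : ℝ)} {δ : ℝ} (hδ : 2 * δ ^ 2 + χ.rOut ≤ 1 / 16) (p : ℝ × ℝ)
    (hp : |p.2| < δ) : radialAmplitude Q χ p = 0 := by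
  by_contra h
  have h1 : χ p.1 ≠ 0 := fun h0 => h (by simp [radialAmplitude, h0])
  have h2 : Q (2 * p.2 ^ 2 + p.1) ≠ 0 := fun h0 => h (by simp [radialAmplitude, h0])
  have h3 : |p.1| < χ.rOut := by
    have : p.1 ∈ Function.support χ := h1
    rwa [χ.support_eq, mem_ball_zero_iff] at this
  have h4 := (hsupp _ h2).1
  have h5 := (abs_lt.1 h3).2
  have h6 := sq_lt_sq.2 (hp.trans_le (le_abs_self δ))
  linarith

lemma integral_eq_integral_Ioi_comp_sq_add {G : ℝ → ℂ} {s : ℝ} (hG : ∀ l ≤ s, G l = 0) :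
    ∫ l, G l = ∫ τ in Set.Ioi (0 : ℝ), ((2 * τ : ℝ) : ℂ) * G (τ ^ 2 + s) := by
  rw [← integral_add_right_eq_self G s,
    ← setIntegral_eq_integral_of_forall_compl_eq_zero (s := Set.Ioi 0)
      (fun y hy => hG _ (by simpa using hy)),
    ← integral_comp_rpow_Ioi_of_pos (g := fun y => G (y + s)) (p := 2) two_pos]
  norm_num

lemma integrable_iff_comp_sq_add {G : ℝ → ℂ} {s : ℝ} (hG : ∀ l ≤ s, G l = 0) :
    Integrable G ↔
      IntegrableOn (fun τ : ℝ => ((2 * τ : ℝ) : ℂ) * G (τ ^ 2 + s)) (Set.Ioi 0) := by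
  have h1 : Integrable G ↔ Integrable fun y => G (y + s) :=
    ⟨fun h => h.comp_add_right s, fun h => by simpa using h.comp_add_right (-s)⟩
  have h2 : IntegrableOn (fun y => G (y + s)) (Set.Ioi 0) ↔ Integrable fun y => G (y + s) :=
    integrableOn_iff_integrable_of_support_subset fun y hy => by
      by_contra h
      exact hy (hG _ (by simpa using h))
  rw [h1, ← h2, ← integrableOn_Ioi_comp_rpow_iff (fun y => G (y + s)) (p := 2) two_ne_zero]
  norm_num

lemma profile_of_le (Q : ℝ → ℝ) {s t l : ℝ} (hl : l ≤ s) : profile Q s t l = 0 := by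
  rw [profile, Real.sqrt_eq_zero_of_nonpos (by linarith)]
  simp

lemma two_mul_profile_sq_add {Q : ℝ → ℝ} {k : ℝ × ℝ → ℂ} {s : ℝ}
    (hks : ∀ τ, k (s, τ) = (2 * Q (2 * τ ^ 2 + s) * rexp (π * (τ ^ 2 + s)) : ℝ)) (t : ℝ) {τ : ℝ}
    (hτ : 0 < τ) : ((2 * τ : ℝ) : ℂ) * profile Q s t (τ ^ 2 + s) =
      k (s, τ) * Complex.exp (2 * π * Complex.I * (t * τ : ℝ)) := by
  have h1 : √(τ ^ 2 + s - s) = τ := by rw [add_sub_cancel_right, Real.sqrt_sq hτ.le]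
  have h2 : 2 * (τ ^ 2 + s) - s = 2 * τ ^ 2 + s := by ring
  rw [profile, h1, h2, hks, ← mul_assoc, ← Complex.ofReal_mul]
  congr 2
  field_simp

lemma integrable_profile {Q : ℝ → ℝ} {k : ℝ × ℝ → ℂ} (hk : IsAmplitude k) {s : ℝ}
    (hks : ∀ τ, k (s, τ) = (2 * Q (2 * τ ^ 2 + s) * rexp (π * (τ ^ 2 + s)) : ℝ)) (t : ℝ) :
    Integrable (profile Q s t) := by
  rw [integrable_iff_comp_sq_add fun l hl => profile_of_le Q hl]
  refine IntegrableOn.congr_fun ?_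
    (fun τ hτ => (two_mul_profile_sq_add hks t hτ).symm) measurableSet_Ioi
  simpa using (hk.integrable_oscInt s 0 t).integrableOn

lemma fourier_profile {Q : ℝ → ℝ} {k : ℝ × ℝ → ℂ} {s : ℝ}
    (hks : ∀ τ, k (s, τ) = (2 * Q (2 * τ ^ 2 + s) * rexp (π * (τ ^ 2 + s)) : ℝ)) (t u : ℝ) :
    𝓕 (profile Q s t) u = Complex.exp (2 * π * Complex.I * (-(u * s) : ℝ)) *
      ∫ τ in Set.Ioi 0, k (s, τ) *
        Complex.exp (2 * π * Complex.I * (t * τ - u * τ ^ 2 : ℝ)) := by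
  rw [Real.fourier_real_eq_integral_exp_smul, integral_eq_integral_Ioi_comp_sq_add (s := s)
    (fun l hl => by rw [profile_of_le Q hl, smul_zero]), ← integral_const_mul]
  refine setIntegral_congr_fun measurableSet_Ioi fun τ hτ => ?_
  simp only [smul_eq_mul]
  rw [mul_left_comm, two_mul_profile_sq_add hks t hτ, mul_left_comm, mul_left_comm _ (k (s, τ)),
    ← Complex.exp_add, ← Complex.exp_add]
  congr 2
  push_cast
  ring

lemma fourier_profile_add_fourier_profile_neg {Q : ℝ → ℝ} {k : ℝ × ℝ → ℂ} (hk : IsAmplitude k)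
    {s : ℝ} (hks : ∀ τ, k (s, τ) = (2 * Q (2 * τ ^ 2 + s) * rexp (π * (τ ^ 2 + s)) : ℝ))
    (t u : ℝ) :
    𝓕 (profile Q s t) u + 𝓕 (profile Q s (-t)) u = modOscInt k s u t := by
  rw [fourier_profile hks, fourier_profile hks, ← mul_add, modOscInt, oscInt]
  congr 1
  have hi := hk.integrable_oscInt s u t
  rw [← intervalIntegral.integral_Iic_add_Ioi (b := 0) hi.integrableOn hi.integrableOn, add_comm]
  congr 1
  have := integral_comp_neg_Iic (0 : ℝ) fun τ => k (s, τ) *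
    Complex.exp (2 * π * Complex.I * (-t * τ - u * τ ^ 2 : ℝ))
  rw [neg_zero] at this
  rw [← this]
  refine integral_congr_ae (ae_of_all _ fun τ => ?_)
  simp only [hks, even_two, Even.neg_pow, neg_mul_neg]

lemma sigmaCheck_eq_integral_modOscInt (hm : 3 ≤ m) {η : Spacetime m → ℝ} (hη : Continuous η)
    {Q : ℝ → ℝ} (hQ : ∀ z, ‖z‖ * η z = Q (‖z‖ ^ 2)) {c : ℝ≥0}
    (hc : (μH[(m : ℝ)] : Measure (EuclideanSpace ℝ (Fin m))) = c • volume)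
    {k : ℝ × ℝ → ℂ} (hk : IsAmplitude k) {s : ℝ}
    (hks : ∀ τ, k (s, τ) = (2 * Q (2 * τ ^ 2 + s) * rexp (π * (τ ^ 2 + s)) : ℝ))
    (w : Spacetime m) :
    Integrable (fun u => modOscInt k s u (timeCoord w) * gaussTransform (spacePart w) u) ∧
      sigmaCheck η s w =
        c * ∫ u, modOscInt k s u (timeCoord w) * gaussTransform (spacePart w) u := by
  have hd : 3 ≤ Module.finrank ℝ (EuclideanSpace ℝ (Fin m)) := by simpa using hm
  have hp := integrable_profile hk hks
  have hF : ∀ t, Integrable fun u => 𝓕 (profile Q s t) u * gaussTransform (spacePart w) u :=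
    fun t => (integrable_gaussTransform (spacePart w) hd).bdd_mul
      (continuous_fourier_of_integrable (hp t)).aestronglyMeasurable
      (ae_of_all _ fun _ => VectorFourier.norm_fourierIntegral_le_integral_norm _ _ _ _ _)
  obtain ⟨_, _, hrad⟩ := integrable_comp_norm_sq_mul_gaussChar
    (V := EuclideanSpace ℝ (Fin m)) (le_trans (by norm_num) hd)
  simp only [← fourier_profile_add_fourier_profile_neg hk hks, add_mul]
  refine ⟨(hF _).add (hF _), ?_⟩
  rw [sigmaCheck_eq (by lia) hη hQ hc s w fun t => (hrad _ (hp t) _).1,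
    integral_add (hF _) (hF _), integral_comp_norm_sq_mul_gaussChar hd (hp _),
    integral_comp_norm_sq_mul_gaussChar hd (hp _)]

end Representation

lemma integral_sub_two_mul_add {f g h : ℝ → ℂ} (hf : Integrable f) (hg : Integrable g)
    (hh : Integrable h) :
    ∫ u, (f u - 2 * g u + h u) = (∫ u, f u) - 2 * (∫ u, g u) + ∫ u, h u := by
  have h1 : Integrable fun u => f u - 2 * g u := hf.sub (hg.const_mul 2)
  rw [integral_add h1 hh, integral_sub hf (hg.const_mul 2), integral_const_mul]

/-- For `n ≥ 5` and any smooth radial bump function `η` supported on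
the annulus `{1/4 ≤ ‖z‖ ≤ 5/4}`, there is a constant `C > 0` (depending only on `n`
and `η`) such that for all `(x,t) ∈ ℝ^{n-1} × ℝ` and all `s ∈ (-1/10, 1/10)`,
`|(σ_s^{(0)})^∨(x,t) - 2(σ_0^{(0)})^∨(x,t) + (σ_{-s}^{(0)})^∨(x,t)|
  ≤ C (1+|t|)^{(2-n)/2} · min((1+|t|)² s², 1)`. -/
theorem statement9 (n m : ℕ) (hn : 5 ≤ n) (hnm : m + 1 = n)
    (η : Spacetime m → ℝ)
    (hηsm : ContDiff ℝ (⊤ : ℕ∞) η)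
    (hηrad : ∀ z z' : Spacetime m, ‖z‖ = ‖z'‖ → η z = η z')
    (hηsupp : ∀ z : Spacetime m, η z ≠ 0 → 1 / 4 ≤ ‖z‖ ∧ ‖z‖ ≤ 5 / 4) :
    ∃ C : ℝ, 0 < C ∧ ∀ (w : Spacetime m) (s : ℝ), s ∈ Set.Ioo (-(1 / 10) : ℝ) (1 / 10) →
      ‖sigmaCheck η s w - 2 * sigmaCheck η 0 w + sigmaCheck η (-s) w‖
        ≤ C * (1 + |timeCoord w|) ^ (((2 : ℝ) - n) / 2) *
            min ((1 + |timeCoord w|) ^ 2 * s ^ 2) 1 := by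
  obtain ⟨Q, hQsm, hQ, hQsupp⟩ := exists_contDiff_radialProfile hηsm hηrad hηsupp
  obtain ⟨c, hc⟩ := exists_hausdorffMeasure_eq_smul m
  have hm : 3 ≤ m := by lia
  set χ₁ : ContDiffBump (0 : ℝ) := ⟨1 / 10, 1, by norm_num, by norm_num⟩
  set χ₂ : ContDiffBump (0 : ℝ) := ⟨1 / 20, 1 / 18, by norm_num, by norm_num⟩
  have hk₁ := isAmplitude_radialAmplitude hQsm hQsupp χ₁
  have hk₂ := isAmplitude_radialAmplitude hQsm hQsupp χ₂
  obtain ⟨C, hC0, hC⟩ := hk₁.exists_norm_integral_modOscInt_le hm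
  obtain ⟨D, hD0, hD⟩ := hk₂.exists_norm_integral_second_difference_le hm
    (δ := 1 / 20) (by norm_num) (radialAmplitude_eq_zero hQsupp (by norm_num [χ₂]))
  refine ⟨c * D + 1600 * (c * C) + 1, by positivity, fun w s hs => ?_⟩
  have hexp : ((2 : ℝ) - n) / 2 = (1 - (m : ℝ)) / 2 := by
    rw [← hnm]
    push_cast
    ring
  rw [hexp]
  set T := 1 + |timeCoord w|
  have hT : 1 ≤ T := le_add_of_nonneg_right (abs_nonneg _)
  set A := T ^ ((1 - (m : ℝ)) / 2)
  have hA : 0 ≤ A := by positivity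
  have hs' : |s| < 1 / 10 := abs_lt.2 hs
  have hrep := fun (r : ℝ) (hr : |r| ≤ 1 / 10) => (sigmaCheck_eq_integral_modOscInt hm
    hηsm.continuous hQ hc hk₁ (radialAmplitude_of_abs_le Q χ₁ (s := r) hr) w).2
  have hsize : ∀ r : ℝ, |r| ≤ 1 / 10 → ‖sigmaCheck η r w‖ ≤ c * C * A := fun r hr => by
    rw [hrep r hr, norm_mul, mul_assoc]
    simpa using mul_le_mul_of_nonneg_left (hC (spacePart w) r (timeCoord w)) c.coe_nonneg
  have htriv : ‖sigmaCheck η s w - 2 * sigmaCheck η 0 w + sigmaCheck η (-s) w‖ ≤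
      4 * (c * C * A) := by
    refine (norm_add_le _ _).trans ((add_le_add_left (norm_sub_le _ _) _).trans ?_)
    rw [norm_mul, Complex.norm_ofNat]
    linarith [hsize s hs'.le, hsize 0 (by norm_num), hsize (-s) (by rw [abs_neg]; exact hs'.le)]
  have hcCA : 0 ≤ c * C * A := by positivity
  rcases le_or_gt |s| (1 / 20) with hs2 | hs2
  · have hrep₂ := fun (r : ℝ) (hr : |r| ≤ 1 / 20) => sigmaCheck_eq_integral_modOscInt hm
      hηsm.continuous hQ hc hk₂ (radialAmplitude_of_abs_le Q χ₂ (s := r) hr) w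
    obtain ⟨i₁, e₁⟩ := hrep₂ s hs2
    obtain ⟨i₂, e₂⟩ := hrep₂ 0 (by norm_num)
    obtain ⟨i₃, e₃⟩ := hrep₂ (-s) (by rwa [abs_neg])
    have hdiff : ‖sigmaCheck η s w - 2 * sigmaCheck η 0 w + sigmaCheck η (-s) w‖ ≤
        c * D * A * (T ^ 2 * s ^ 2) := by
      have h := mul_le_mul_of_nonneg_left (hD (spacePart w) s (timeCoord w)) c.coe_nonneg
      simp only [add_mul, sub_mul, mul_assoc (2 : ℂ)] at h
      rw [integral_sub_two_mul_add i₁ i₂ i₃] at h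
      rw [e₁, e₂, e₃, mul_left_comm, ← mul_sub, ← mul_add, norm_mul]
      simpa [mul_assoc] using h
    have hp : 0 ≤ A * (T ^ 2 * s ^ 2) := by positivity
    rcases min_cases (T ^ 2 * s ^ 2) 1 with ⟨h, -⟩ | ⟨h, -⟩ <;> rw [h]
    · nlinarith [mul_nonneg (mul_nonneg c.coe_nonneg hC0) hp, hp]
    · nlinarith [mul_nonneg (mul_nonneg c.coe_nonneg hD0) hA]
  · have hmin : 1 / 400 ≤ min (T ^ 2 * s ^ 2) 1 := by
      refine le_min ?_ (by norm_num)
      have h1 : 1 ≤ T ^ 2 := one_le_pow₀ hT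
      have h2 : 1 / 400 ≤ s ^ 2 := by rw [← sq_abs]; nlinarith
      nlinarith
    refine htriv.trans ?_
    calc 4 * (c * C * A) = 1600 * (c * C) * A * (1 / 400) := by ring
      _ ≤ (c * D + 1600 * (c * C) + 1) * A * min (T ^ 2 * s ^ 2) 1 := by
        have : 0 ≤ c * D := by positivity
        gcongr
        linarith
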